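/- arXiv:2202.00304 — 2 statements merged into one kernel-verified Lean document; each statement's English description precedes it below -/
import Mathlib

section
/- Whether N is cyclic or not, for any nonzero finite length graded S-module N on P^n (n ≥ 3), the first syzygy bundle P_1(N) satisfies H^2_*(Λ²P_1(N)) ≠ 0. -/
/-!
Background setup (the paper works on projective space `ℙⁿ` over a field `K`):
we encode a coherent sheaf on `ℙⁿ_K` by a module `M` over the homogeneous coordinate
ring `S = K[X₀,…,Xₙ]` (namely `M = Γ_*` of the sheaf), and the intermediate cohomology
module `H^i_*(F) = ⊕_ν H^i(ℙⁿ, F(ν))` (for `i ≥ 1`) by the local cohomology module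
`H^{i+1}_𝔪(M)` at the irrelevant maximal ideal `𝔪 = (X₀,…,Xₙ)`, to which it is
canonically isomorphic.
-/

open CategoryTheory TensorProduct

noncomputable section

/-- The homogeneous coordinate ring `S = K[X₀,…,Xₙ]` of `ℙⁿ`. -/
abbrev PolyS (K : Type) [Field K] (n : ℕ) : Type := MvPolynomial (Fin (n+1)) K

variable (K : Type) [Field K] (n : ℕ)

/-- The irrelevant maximal ideal `𝔪 = (X₀,…,Xₙ)` of `S`. -/
def irrel : Ideal (PolyS K n) := Ideal.span (Set.range MvPolynomial.X)

/-- `H^i_*` of the sheaf on `ℙⁿ` associated to the `S`-module `M`, encoded (for `i ≥ 1`)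
as the local cohomology module `H^{i+1}_𝔪(M)`. -/
def Hstar (i : ℕ) (M : Type) [AddCommGroup M] [Module (PolyS K n) M] :
    ModuleCat (PolyS K n) :=
  (localCohomology (irrel K n) (i+1)).obj (ModuleCat.of (PolyS K n) M)

/-- `M` is (the module of sections `Γ_*` of) an algebraic vector bundle on `ℙⁿ`:
finitely generated, depth `≥ 2` at `𝔪` (i.e. `H⁰_𝔪(M) = H¹_𝔪(M) = 0`, so `M = Γ_*(M̃)`),
and locally free at every prime other than the irrelevant ideal. -/
structure IsBundleModule (M : Type) [AddCommGroup M] [Module (PolyS K n) M] : Prop where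
  finite : Module.Finite (PolyS K n) M
  h0 : Subsingleton ((localCohomology (irrel K n) 0).obj (ModuleCat.of (PolyS K n) M))
  h1 : Subsingleton ((localCohomology (irrel K n) 1).obj (ModuleCat.of (PolyS K n) M))
  locFree : ∀ p : PrimeSpectrum (PolyS K n), p.asIdeal ≠ irrel K n →
    Module.Free (Localization.AtPrime p.asIdeal) (LocalizedModule p.asIdeal.primeCompl M)

/-- `M` represents a vector bundle of rank two on `ℙⁿ`. -/
structure IsRankTwoBundleModule (M : Type) [AddCommGroup M] [Module (PolyS K n) M]
    extends IsBundleModule K n M : Prop where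
  rank2 : ∀ p : PrimeSpectrum (PolyS K n), p.asIdeal ≠ irrel K n →
    Module.rank (Localization.AtPrime p.asIdeal) (LocalizedModule p.asIdeal.primeCompl M) = 2

/-- A finite length module which is moreover supported at the irrelevant ideal: the
(ungraded avatar of the) notion of a *graded* `S`-module of finite length. -/
def IsGradedFiniteLength (N : Type) [AddCommGroup N] [Module (PolyS K n) N] : Prop :=
  IsFiniteLength (PolyS K n) N ∧
    ∃ c : ℕ, (irrel K n) ^ c ≤ Module.annihilator (PolyS K n) N

/-- A minimal graded free resolution `⋯ → L₁ → L₀ → N → 0` of an `S`-module `N`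
(minimality: all differentials have entries in the maximal ideal `𝔪`).
Here `d i : L (i+1) → L i` and `P_k(N)`, the `k`-th syzygy module, is `range (d k)`,
i.e. the image of `f_{k+1} : L_{k+1} → L_k`. -/
structure MinimalResolution (N : Type) [AddCommGroup N] [Module (PolyS K n) N] where
  L : ℕ → Type
  [addCommGroup : ∀ i, AddCommGroup (L i)]
  [module : ∀ i, Module (PolyS K n) (L i)]
  free : ∀ i, Module.Free (PolyS K n) (L i)
  finite : ∀ i, Module.Finite (PolyS K n) (L i)
  d : ∀ i : ℕ, L (i+1) →ₗ[PolyS K n] L i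
  aug : L 0 →ₗ[PolyS K n] N
  aug_surjective : Function.Surjective aug
  exact0 : LinearMap.range (d 0) = LinearMap.ker aug
  exact : ∀ i : ℕ, LinearMap.range (d (i+1)) = LinearMap.ker (d i)
  minimal : ∀ i : ℕ, LinearMap.range (d i) ≤ (irrel K n) • (⊤ : Submodule (PolyS K n) (L i))
  minimal0 : LinearMap.ker aug ≤ (irrel K n) • (⊤ : Submodule (PolyS K n) (L 0))

attribute [instance] MinimalResolution.addCommGroup MinimalResolution.module

/-!
Let `Z = ker (d : L₁ → L₀)` be the syzygy module. The complex `Λ²Z → Λ²L₁ → L₁ ⊗ L₀ → S²L₀` has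
cokernel `S²N`, which is killed by a power of the ideal `J`. Multiplication by any `a ∈ J ^ c` on
`L₀` factors through `d`, because `a` kills `N`; the homotopies obtained from such factorizations
show that the homology of the complex is killed by a power of `J` as well. Local cohomology in
positive degrees does not see such modules, and free modules have none in degrees below three. If
`H³_J(Λ²Z)` were zero, then chasing the complex from left to right would give `H⁰_J(S²N) = 0`,
whence `S²N = 0`. But there is a surjection `β` from `N` to some residue field `R ⧸ I`, and
`x · y ↦ β x * β y` is a nonzero map from `S²N` to that field.
-/

universe u v w

section LocalCohomology

open Limits Abelian

section HomologyFunctional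

variable {D : Type u} [Category.{v} D] [Abelian D] {I : D}

/-- The morphism `H_n(E) ⟶ I` induced by a morphism `k : E_n ⟶ I` that vanishes on boundaries. -/
def homologyDesc (E : ChainComplex D ℕ) {m : ℕ} (k : E.X m ⟶ I) (hk : E.d (m + 1) m ≫ k = 0) :
    E.homology m ⟶ I :=
  E.homologyι m ≫ E.descOpcycles k (m + 1) (by simp) hk

lemma homologyMap_comp_homologyDesc {E E' : ChainComplex D ℕ} (φ : E' ⟶ E) {m : ℕ} (k : E.X m ⟶ I)
    (hk : E.d (m + 1) m ≫ k = 0) :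
    HomologicalComplex.homologyMap φ m ≫ homologyDesc E k hk =
      homologyDesc E' (φ.f m ≫ k) (by rw [← φ.comm_assoc, hk, comp_zero]) := by
  rw [homologyDesc, HomologicalComplex.homologyι_naturality_assoc,
    HomologicalComplex.opcyclesMap_comp_descOpcycles, homologyDesc]

lemma exists_d_comp_eq_of_homologyDesc_eq_zero [Injective I] (E : ChainComplex D ℕ) {m : ℕ}
    (k : E.X (m + 1) ⟶ I) (hk : E.d (m + 2) (m + 1) ≫ k = 0) (h : homologyDesc E k hk = 0) :
    ∃ g : E.X m ⟶ I, E.d (m + 1) m ≫ g = k := by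
  have hex := ShortComplex.exact_of_f_is_kernel
    (ShortComplex.mk _ _ (E.homologyι_comp_fromOpcycles (m + 1) m))
    (E.homologyIsKernel _ _ (by simp))
  refine ⟨hex.descToInjective _ h, ?_⟩
  rw [← E.p_fromOpcycles, Category.assoc]
  exact (congrArg (E.pOpcycles (m + 1) ≫ ·) (hex.comp_descToInjective _ h)).trans
    (E.p_descOpcycles _ _ _ _)

end HomologyFunctional

section Yoneda

variable {R : Type v} [CommRing R] {C : Type u} [Category.{v} C] [Abelian C] [Linear R C]

/-- The functor `X ↦ Hom(X, Y)` regarded as a covariant functor to the opposite of the category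
of `R`-modules; its left derived functors are the `Ext` modules. -/
abbrev homToOp (R : Type v) [CommRing R] [Linear R C] (Y : C) : C ⥤ (ModuleCat.{v} R)ᵒᵖ :=
  ((linearYoneda R C).obj Y).rightOp

/-- A morphism `f : X ⟶ Y` as an element of `Hom(X, Y)`, encoded by the map `R → Hom(X, Y)`
sending `1` to `f`. -/
def homElement (R : Type v) [CommRing R] [Linear R C] {X Y : C} (f : X ⟶ Y) :
    (homToOp R Y).obj X ⟶ Opposite.op (ModuleCat.of R R) :=
  (ModuleCat.ofHom (LinearMap.toSpanSingleton R (X ⟶ Y) f)).op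

lemma homElement_injective {X Y : C} :
    Function.Injective (homElement R : (X ⟶ Y) → _) := fun f g h => by
  have h' : (1 : R) • f = (1 : R) • g :=
    congrArg (fun k => (ModuleCat.Hom.hom k.unop (1 : R) : X ⟶ Y)) h
  simpa only [one_smul] using h'

lemma homElement_surjective {X Y : C} :
    Function.Surjective (homElement R : (X ⟶ Y) → _) := fun k =>
  ⟨(ModuleCat.Hom.hom k.unop (1 : R) : X ⟶ Y),
    Quiver.Hom.unop_inj (ModuleCat.hom_ext (LinearMap.ext_ring (one_smul R _)))⟩

lemma map_comp_homElement {X' X Y : C} (g : X' ⟶ X) (f : X ⟶ Y) :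
    (homToOp R Y).map g ≫ homElement R f = homElement R (g ≫ f) := by
  refine Quiver.Hom.unop_inj (ModuleCat.hom_ext (LinearMap.ext_ring ?_))
  change g ≫ ((1 : R) • f) = (1 : R) • (g ≫ f)
  rw [Linear.comp_smul]

lemma homElement_zero {X Y : C} : homElement R (0 : X ⟶ Y) = 0 := by
  refine Quiver.Hom.unop_inj (ModuleCat.hom_ext (LinearMap.ext_ring ?_))
  change (1 : R) • (0 : X ⟶ Y) = 0
  rw [smul_zero]

instance injective_op_self : Injective (Opposite.op (ModuleCat.of R R)) := by
  have : Projective (ModuleCat.of R R) :=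
    ModuleCat.projective_of_free (Module.Basis.singleton Unit R)
  infer_instance

/-- The homology functional attached to a cocycle `f` of the complex `Hom(P, Y)`. -/
def cocycleFunctional (R : Type v) [CommRing R] [Linear R C] (P : ChainComplex C ℕ) {Y : C} {m : ℕ}
    (f : P.X m ⟶ Y) (hf : P.d (m + 1) m ≫ f = 0) :
    (HomologicalComplex.homologyFunctor _ _ m).obj (((homToOp R Y).mapHomologicalComplex _).obj P) ⟶
      Opposite.op (ModuleCat.of R R) :=
  homologyDesc _ (homElement R f)
    ((map_comp_homElement _ _).trans ((congrArg _ hf).trans homElement_zero))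

lemma map_comp_cocycleFunctional {P P' : ChainComplex C ℕ} (φ : P' ⟶ P) {Y : C} {m : ℕ}
    (f : P.X m ⟶ Y) (hf : P.d (m + 1) m ≫ f = 0) :
    ((homToOp R Y).mapHomologicalComplex _ ⋙ HomologicalComplex.homologyFunctor _ _ m).map φ ≫
        cocycleFunctional R P f hf =
      cocycleFunctional R P' (φ.f m ≫ f) (by rw [← φ.comm_assoc, hf, comp_zero]) := by
  refine (homologyMap_comp_homologyDesc _ _ _).trans ?_
  unfold cocycleFunctional
  congr 1
  exact map_comp_homElement _ _

lemma exists_d_comp_eq_of_cocycleFunctional_eq_zero (P : ChainComplex C ℕ) {Y : C} {m : ℕ}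
    (f : P.X (m + 1) ⟶ Y) (hf : P.d (m + 2) (m + 1) ≫ f = 0)
    (h : cocycleFunctional R P f hf = 0) : ∃ g : P.X m ⟶ Y, P.d (m + 1) m ≫ g = f := by
  obtain ⟨k, hk⟩ := exists_d_comp_eq_of_homologyDesc_eq_zero _ _ _ h
  obtain ⟨g, rfl⟩ := homElement_surjective k
  exact ⟨g, homElement_injective ((map_comp_homElement _ _).symm.trans hk)⟩

variable [HasExt.{v} C] [EnoughProjectives C]

/- `CategoryTheory.Ext` (derived functors) and `CategoryTheory.Abelian.Ext` (derived category) are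
not compared in the library, but both are computed by a projective resolution. -/
lemma exists_ext_detecting {X Y : C} {m : ℕ} (α : Abelian.Ext X Y (m + 1)) :
    ∃ y : ((Ext R C (m + 1)).obj (Opposite.op X)).obj Y, ∀ {X' : C} (g : X' ⟶ X),
      ((Ext R C (m + 1)).map g.op).app Y y = 0 →
        (Ext.mk₀ g).comp α (zero_add (m + 1)) = 0 := by
  let P (Z : C) : ProjectiveResolution Z := projectiveResolution Z
  obtain ⟨f, hf, rfl⟩ := (P X).extMk_surjective α (m + 2) rfl
  let y := ((P X).isoLeftDerivedObj (homToOp R Y) (m + 1)).hom ≫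
    cocycleFunctional R (P X).complex f hf
  refine ⟨ModuleCat.Hom.hom y.unop (1 : R), fun {X'} g hg => ?_⟩
  let ψ : ProjectiveResolution.Hom (P X') (P X) g :=
    { hom := ProjectiveResolution.lift g (P X') (P X)
      hom_f_zero_comp_π_f_zero := by rw [ProjectiveResolution.lift_commutes_zero]; simp }
  have hnat := ProjectiveResolution.isoLeftDerivedObj_hom_naturality g (P X') (P X) ψ.hom
    (ProjectiveResolution.lift_commutes_zero _ _ _) (homToOp R Y) (m + 1)
  have hzero : ((homToOp R Y).leftDerived (m + 1)).map g ≫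
      ((P X).isoLeftDerivedObj (homToOp R Y) (m + 1)).hom ≫
        cocycleFunctional R (P X).complex f hf = 0 :=
    Quiver.Hom.unop_inj (ModuleCat.hom_ext (LinearMap.ext_ring hg))
  rw [← Category.assoc, hnat, Category.assoc, map_comp_cocycleFunctional] at hzero
  rw [ProjectiveResolution.mk₀_comp_extMk _ _ _ _ ψ,
    ProjectiveResolution.extMk_eq_zero_iff _ _ _ _ _ m rfl]
  exact exists_d_comp_eq_of_cocycleFunctional_eq_zero _ _ _
    ((cancel_epi _).1 (hzero.trans comp_zero.symm))

end Yoneda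

section ExtVanishesAlong

variable {C : Type u} [Category.{v} C] [Abelian C] [HasExt.{w} C] {D : Type*} [Category D]

/-- Every class in `Ext^i(F j, Y)` dies after pulling it back along some transition morphism
`F j' ⟶ F j` of the inverse system `F`; when `F` is cofiltered, this says elementwise that
`colim Ext^i(F j, Y)` is zero. -/
def ExtVanishesAlong (F : D ⥤ C) (i : ℕ) (Y : C) : Prop :=
  ∀ (j : D) (x : Abelian.Ext (F.obj j) Y i),
    ∃ (j' : D) (φ : j' ⟶ j), (Ext.mk₀ (F.map φ)).comp x (zero_add i) = 0

namespace ExtVanishesAlong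

variable {F : D ⥤ C} {i : ℕ} {S : ShortComplex C}

lemma of_subsingleton {Y : C} (h : ∀ j, Subsingleton (Abelian.Ext (F.obj j) Y i)) :
    ExtVanishesAlong F i Y := fun j _ =>
  ⟨j, 𝟙 j, (h j).elim _ _⟩

lemma middle (hS : S.ShortExact) (h₁ : ExtVanishesAlong F i S.X₁)
    (h₃ : ExtVanishesAlong F i S.X₃) : ExtVanishesAlong F i S.X₂ := by
  intro j x
  obtain ⟨j₁, φ, hφ⟩ := h₃ j (x.comp (Ext.mk₀ S.g) (add_zero i))
  rw [← Ext.comp_assoc _ _ _ (zero_add i) (add_zero i) (by omega)] at hφ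
  obtain ⟨y, hy⟩ := Ext.covariant_sequence_exact₂ _ hS _ hφ
  obtain ⟨j₂, ψ, hψ⟩ := h₁ j₁ y
  refine ⟨j₂, ψ ≫ φ, ?_⟩
  rw [F.map_comp, ← Ext.mk₀_comp_mk₀_assoc, ← hy,
    ← Ext.comp_assoc _ _ _ (zero_add i) (add_zero i) (by omega), hψ, Ext.zero_comp]

lemma right (hS : S.ShortExact) (h₂ : ExtVanishesAlong F i S.X₂)
    (h₁ : ExtVanishesAlong F (i + 1) S.X₁) : ExtVanishesAlong F i S.X₃ := by
  intro j x
  obtain ⟨j₁, φ, hφ⟩ := h₁ j (x.comp hS.extClass rfl)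
  rw [← Ext.comp_assoc _ _ _ (zero_add i) rfl (by omega)] at hφ
  obtain ⟨y, hy⟩ := Ext.covariant_sequence_exact₃ _ hS _ rfl hφ
  obtain ⟨j₂, ψ, hψ⟩ := h₂ j₁ y
  refine ⟨j₂, ψ ≫ φ, ?_⟩
  rw [F.map_comp, ← Ext.mk₀_comp_mk₀_assoc, ← hy,
    ← Ext.comp_assoc _ _ _ (zero_add i) (add_zero i) (by omega), hψ, Ext.zero_comp]

end ExtVanishesAlong

lemma mk₀_comp_extClass_comp_eq_zero {S S' : ShortComplex C} (hS : S.ShortExact)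
    (hS' : S'.ShortExact) (φ : S' ⟶ S) {Y : C} {i : ℕ} (y : Abelian.Ext S.X₁ Y i)
    (hy : (Ext.mk₀ φ.τ₁).comp y (zero_add i) = 0) :
    (Ext.mk₀ φ.τ₃).comp (hS.extClass.comp y (add_comm 1 i)) (zero_add (i + 1)) = 0 := by
  rw [← Ext.comp_assoc (Ext.mk₀ φ.τ₃) _ _ (zero_add 1) (add_comm 1 i) (by omega),
    ← ShortComplex.ShortExact.extClass_naturality hS' hS φ,
    Ext.comp_assoc _ _ _ (add_zero 1) (zero_add i) (by omega), hy, Ext.comp_zero]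

end ExtVanishesAlong

section LocalCohomologyVanishes

variable {R : Type u} [CommRing R]

/-- The inverse system of the modules `R ⧸ J ^ t`. -/
abbrev powerQuotients (J : Ideal R) : ℕᵒᵖ ⥤ ModuleCat.{u} R :=
  localCohomology.ringModIdeals (localCohomology.idealPowersDiagram J)

/-- Elementwise form of the vanishing of the local cohomology module `H^i_J(M)`, phrased with the
`Ext` groups of the derived category, for which long exact sequences are available. -/
def LocalCohomologyVanishes (J : Ideal R) (i : ℕ) (M : Type u) [AddCommGroup M] [Module R M] :
    Prop :=
  ExtVanishesAlong (powerQuotients J) i (ModuleCat.of R M)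

lemma localCohomologyVanishes_of_subsingleton {J : Ideal R} {i : ℕ} {M : Type u} [AddCommGroup M]
    [Module R M] (h : Subsingleton ((localCohomology J (i + 1)).obj (ModuleCat.of R M))) :
    LocalCohomologyVanishes J (i + 1) M := by
  intro j x
  obtain ⟨y, hy⟩ := exists_ext_detecting (R := R) x
  let F := localCohomology.diagram (localCohomology.idealPowersDiagram J) (i + 1)
  let G := F ⋙ (evaluation _ _).obj (ModuleCat.of R M)
  have hF : Subsingleton ((colimit F).obj (ModuleCat.of R M)) := h
  have hG : Subsingleton (colimit G : ModuleCat.{u} R) :=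
    (colimitObjIsoColimitCompEvaluation F (ModuleCat.of R M)).toLinearEquiv.symm.subsingleton
  have := preservesSmallestFilteredColimits_of_preservesFilteredColimits (forget (ModuleCat.{u} R))
  obtain ⟨j', φ, hφ⟩ := Concrete.colimit_rep_eq_zero R G (Opposite.op j) y (Subsingleton.elim _ _)
  exact ⟨j'.unop, φ.unop, hy _ hφ⟩

lemma shortExact_of_functionExact {L M N : Type u} [AddCommGroup L] [Module R L] [AddCommGroup M]
    [Module R M] [AddCommGroup N] [Module R N] {f : L →ₗ[R] M} {g : M →ₗ[R] N}
    (hf : Function.Injective f) (hg : Function.Surjective g) (hfg : Function.Exact f g) :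
    (ModuleCat.shortComplexOfCompEqZero f g hfg.linearMap_comp_eq_zero).ShortExact where
  exact := (ShortComplex.ShortExact.moduleCat_exact_iff_function_exact _).2 hfg
  mono_f := (ModuleCat.mono_iff_injective _).2 hf
  epi_g := (ModuleCat.epi_iff_surjective _).2 hg

namespace LocalCohomologyVanishes

variable {J : Ideal R} {i : ℕ} {L M N : Type u} [AddCommGroup L] [Module R L]
  [AddCommGroup M] [Module R M] [AddCommGroup N] [Module R N] {f : L →ₗ[R] M} {g : M →ₗ[R] N}

lemma middle (hf : Function.Injective f) (hg : Function.Surjective g) (hfg : Function.Exact f g)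
    (hL : LocalCohomologyVanishes J i L) (hN : LocalCohomologyVanishes J i N) :
    LocalCohomologyVanishes J i M :=
  ExtVanishesAlong.middle (shortExact_of_functionExact hf hg hfg) hL hN

lemma right (hf : Function.Injective f) (hg : Function.Surjective g) (hfg : Function.Exact f g)
    (hM : LocalCohomologyVanishes J i M) (hL : LocalCohomologyVanishes J (i + 1) L) :
    LocalCohomologyVanishes J i N :=
  ExtVanishesAlong.right (shortExact_of_functionExact hf hg hfg) hM hL

lemma quotient (P : Submodule R M) (hM : LocalCohomologyVanishes J i M)
    (hP : LocalCohomologyVanishes J (i + 1) P) : LocalCohomologyVanishes J i (M ⧸ P) :=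
  right P.injective_subtype P.mkQ_surjective (LinearMap.exact_subtype_mkQ P) hM hP

lemma of_quotient (P : Submodule R M) (hP : LocalCohomologyVanishes J i P)
    (hQ : LocalCohomologyVanishes J i (M ⧸ P)) : LocalCohomologyVanishes J i M :=
  middle P.injective_subtype P.mkQ_surjective (LinearMap.exact_subtype_mkQ P) hP hQ

lemma range (g : M →ₗ[R] N) (hM : LocalCohomologyVanishes J i M)
    (hker : LocalCohomologyVanishes J (i + 1) (LinearMap.ker g)) :
    LocalCohomologyVanishes J i (LinearMap.range g) :=
  right (f := (LinearMap.ker g).subtype) (Submodule.injective_subtype _) g.surjective_rangeRestrict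
    (LinearMap.exact_iff.2 (by rw [g.ker_rangeRestrict, Submodule.range_subtype])) hM hker

lemma subsingleton_of_pow_le_annihilator {c : ℕ} (h : LocalCohomologyVanishes J 0 M)
    (hc : J ^ c ≤ Module.annihilator R M) : Subsingleton M := by
  refine subsingleton_of_forall_eq 0 fun x => ?_
  let φ : (powerQuotients J).obj (Opposite.op c) ⟶ ModuleCat.of R M :=
    ModuleCat.ofHom (Submodule.liftQ _ (LinearMap.toSpanSingleton R M x)
      fun a ha => by simpa using Module.mem_annihilator.1 (hc ha) x)
  obtain ⟨j, ψ, hψ⟩ := h (Opposite.op c) (Ext.mk₀ φ)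
  rw [Ext.mk₀_comp_mk₀, Ext.mk₀_eq_zero_iff] at hψ
  have hone : (1 : R) • x = 0 :=
    congrArg (fun k => ModuleCat.Hom.hom k (Submodule.mkQ (J ^ j.unop) (1 : R))) hψ
  simpa using hone

end LocalCohomologyVanishes
end LocalCohomologyVanishes

section Torsion

variable {R : Type u} [CommRing R]

section KernelSequence

variable {L M L' M' : Type u} [AddCommGroup L] [Module R L] [AddCommGroup M] [Module R M]
  [AddCommGroup L'] [Module R L'] [AddCommGroup M'] [Module R M']

/-- The morphism of short complexes `(ker π' → L' → M') ⟶ (ker π → L → M)` given by a commutative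
square. -/
def shortComplexKerMap {π' : L' →ₗ[R] M'} {π : L →ₗ[R] M} (β : L' →ₗ[R] L) (γ : M' →ₗ[R] M)
    (h : π ∘ₗ β = γ ∘ₗ π') : π'.shortComplexKer ⟶ π.shortComplexKer where
  τ₁ := ModuleCat.ofHom (β.restrict fun x hx => by
    rw [LinearMap.mem_ker] at hx ⊢
    rw [← LinearMap.comp_apply, h, LinearMap.comp_apply, hx, map_zero])
  τ₂ := ModuleCat.ofHom β
  τ₃ := ModuleCat.ofHom γ
  comm₁₂ := rfl
  comm₂₃ := by rw [← ModuleCat.ofHom_comp, h, ModuleCat.ofHom_comp]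

end KernelSequence

variable {T : Type u} [AddCommGroup T] [Module R T] {J : Ideal R} {c : ℕ}

lemma mk₀_comp_eq_zero_of_range_le {X Z : Type u} [AddCommGroup X] [Module R X] [AddCommGroup Z]
    [Module R Z] {Y : ModuleCat.{u} R} {i : ℕ} {x : Abelian.Ext (ModuleCat.of R X) Y i}
    {P : Submodule R X} (hP : (Ext.mk₀ (ModuleCat.ofHom P.subtype)).comp x (zero_add i) = 0)
    (f : Z →ₗ[R] X) (hf : LinearMap.range f ≤ P) :
    (Ext.mk₀ (ModuleCat.ofHom f)).comp x (zero_add i) = 0 := by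
  let f' : Z →ₗ[R] P := f.codRestrict P fun z => hf ⟨z, rfl⟩
  have hfac : ModuleCat.ofHom f = ModuleCat.ofHom f' ≫ ModuleCat.ofHom P.subtype := rfl
  rw [hfac, ← Ext.mk₀_comp_mk₀_assoc, hP, Ext.comp_zero]

/- Artin–Rees, applied to the syzygies of `X`, carries the case `i = 0` through the dimension
shift. -/
lemma exists_mk₀_smul_top_comp_eq_zero [IsNoetherianRing R]
    (hc : J ^ c ≤ Module.annihilator R T) {i : ℕ} {X : Type u} [AddCommGroup X] [Module R X]
    [Module.Finite R X] (x : Abelian.Ext (ModuleCat.of R X) (ModuleCat.of R T) i) :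
    ∃ s : ℕ, (Ext.mk₀ (ModuleCat.ofHom (J ^ s • ⊤ : Submodule R X).subtype)).comp x
      (zero_add i) = 0 := by
  induction i generalizing X with
  | zero =>
    obtain ⟨φ, rfl⟩ := Ext.addEquiv₀.symm.surjective x
    refine ⟨c, ?_⟩
    have hφ : ModuleCat.ofHom (J ^ c • ⊤ : Submodule R X).subtype ≫ φ = 0 := by
      ext z
      refine Submodule.smul_induction_on (p := fun z => φ.hom z = 0) z.2 ?_ ?_
      · intro a ha y _
        rw [map_smul, Module.mem_annihilator.1 (hc ha)]
      · intro y y' hy hy'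
        rw [map_add, hy, hy', add_zero]
    simp [hφ]
  | succ i ih =>
    obtain ⟨r, π, hπ⟩ := Module.Finite.exists_fin' R X
    have hS := LinearMap.shortExact_shortComplexKer hπ
    have : Projective π.shortComplexKer.X₂ := ModuleCat.projective_of_free (Pi.basisFun R (Fin r))
    obtain ⟨y, rfl⟩ := precomp_extClass_surjective_of_projective_X₂ _ hS i x
    obtain ⟨s, hs⟩ := ih (X := LinearMap.ker π) y
    obtain ⟨k, hk⟩ := Ideal.exists_pow_inf_eq_pow_smul J (LinearMap.ker π)
    let P : Submodule R (Fin r → R) := J ^ (s + k) • ⊤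
    have hP : J ^ (s + k) • ⊤ = P.map π := by
      rw [Submodule.map_smul'', Submodule.map_top, LinearMap.range_eq_top.2 hπ]
    refine ⟨s + k, ?_⟩
    rw [hP]
    refine mk₀_comp_extClass_comp_eq_zero hS
      (LinearMap.shortExact_shortComplexKer (π.submoduleMap_surjective P))
      (shortComplexKerMap P.subtype (P.map π).subtype rfl) y
      (mk₀_comp_eq_zero_of_range_le hs _ ?_)
    rintro _ ⟨⟨⟨b, hbP⟩, hbπ⟩, rfl⟩
    have hb : b ∈ J ^ (s + k) • ⊤ ⊓ LinearMap.ker π := ⟨hbP, congrArg Subtype.val hbπ⟩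
    rw [hk _ (Nat.le_add_left k s), Nat.add_sub_cancel] at hb
    exact (Submodule.mem_smul_top_iff _ _ _).2 (Submodule.smul_mono le_rfl inf_le_right hb)

lemma LocalCohomologyVanishes.of_pow_le_annihilator [IsNoetherianRing R]
    (hc : J ^ c ≤ Module.annihilator R T) (i : ℕ) : LocalCohomologyVanishes J (i + 1) T := by
  intro j x
  have hS (t : ℕ) := LinearMap.shortExact_shortComplexKer (Submodule.mkQ_surjective (J ^ t))
  have : Projective (Submodule.mkQ (J ^ j.unop)).shortComplexKer.X₂ :=
    ModuleCat.projective_of_free (Module.Basis.singleton Unit R)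
  obtain ⟨y, rfl⟩ := precomp_extClass_surjective_of_projective_X₂ _ (hS j.unop) i x
  obtain ⟨s, hs⟩ := exists_mk₀_smul_top_comp_eq_zero hc
    (X := LinearMap.ker (Submodule.mkQ (J ^ j.unop))) y
  let φ : Opposite.op (s + j.unop) ⟶ j := (homOfLE (Nat.le_add_left j.unop s)).op
  refine ⟨_, φ, mk₀_comp_extClass_comp_eq_zero (hS j.unop) (hS (s + j.unop))
    (shortComplexKerMap LinearMap.id ((powerQuotients J).map φ).hom rfl) y
    (mk₀_comp_eq_zero_of_range_le hs _ ?_)⟩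
  rintro _ ⟨⟨b, hb⟩, rfl⟩
  refine (Submodule.mem_smul_top_iff _ _ _).2 ?_
  change b ∈ J ^ s • LinearMap.ker (Submodule.mkQ (J ^ j.unop))
  rwa [Submodule.ker_mkQ, smul_eq_mul, ← pow_add, ← Submodule.ker_mkQ (J ^ _)]

lemma exists_pow_le_annihilator [IsNoetherianRing R]
    (h : ∀ a ∈ J ^ c, ∀ x : T, (a * a) • x = 0) : ∃ e, J ^ e ≤ Module.annihilator R T := by
  have hrad : J ^ c ≤ (Module.annihilator R T).radical := fun a ha =>
    ⟨2, Module.mem_annihilator.2 fun x => by rw [pow_two, h a ha]⟩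
  obtain ⟨k, hk⟩ := Ideal.exists_pow_le_of_le_radical_of_fg hrad (IsNoetherian.noetherian _)
  exact ⟨c * k, by rwa [pow_mul]⟩

end Torsion

lemma subsingleton_ext_of_free {R : Type u} [CommRing R] {X : ModuleCat.{u} R} {i : ℕ}
    (h : Subsingleton (Abelian.Ext X (ModuleCat.of R R) i)) (F : Type u) [AddCommGroup F]
    [Module R F] [Module.Free R F] [Module.Finite R F] :
    Subsingleton (Abelian.Ext X (ModuleCat.of R F) i) := by
  let b := Module.Free.chooseBasis R F
  have hid : 𝟙 (ModuleCat.of R F) = ∑ j, ModuleCat.ofHom (b.coord j) ≫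
      ModuleCat.ofHom (LinearMap.toSpanSingleton R F (b j)) := by
    ext v
    simp [ModuleCat.hom_sum]
  refine subsingleton_of_forall_eq 0 fun x => ?_
  rw [← Ext.comp_mk₀_id x, hid, Ext.mk₀_sum, Ext.comp_sum]
  refine Finset.sum_eq_zero fun j _ => ?_
  rw [← Ext.mk₀_comp_mk₀, ← Ext.comp_assoc _ _ _ (add_zero i) (add_zero 0) (by omega),
    Subsingleton.elim (x.comp (Ext.mk₀ (ModuleCat.ofHom (b.coord j))) (add_zero i)) 0,
    Ext.zero_comp]

namespace LocalCohomologyVanishes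

variable {R : Type u} [CommRing R] {J : Ideal R}

lemma ker_of_exact_up_to_torsion [IsNoetherianRing R] {A B C : Type u} [AddCommGroup A]
    [Module R A] [AddCommGroup B] [Module R B] [AddCommGroup C] [Module R C] {k : A →ₗ[R] B}
    {g : B →ₗ[R] C} {c i : ℕ} (hgk : LinearMap.range k ≤ LinearMap.ker g)
    (hker : ∀ a ∈ J ^ c, ∀ b, g b = 0 → (a * a) • b ∈ LinearMap.range k)
    (hA : LocalCohomologyVanishes J (i + 1) A)
    (hk : LocalCohomologyVanishes J (i + 2) (LinearMap.ker k)) :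
    LocalCohomologyVanishes J (i + 1) (LinearMap.ker g) := by
  let k' : A →ₗ[R] LinearMap.ker g := k.codRestrict _ fun x => hgk ⟨x, rfl⟩
  have hker_k' : LinearMap.ker k' = LinearMap.ker k := LinearMap.ker_codRestrict _ _ _
  have htorsion : ∀ a ∈ J ^ c, ∀ q : LinearMap.ker g ⧸ LinearMap.range k', (a * a) • q = 0 := by
    intro a ha q
    obtain ⟨b, rfl⟩ := Submodule.mkQ_surjective _ q
    obtain ⟨x, hx⟩ := hker a ha b b.2
    rw [← map_smul]
    exact (Submodule.Quotient.mk_eq_zero _).2 ⟨x, Subtype.ext hx⟩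
  obtain ⟨e, he⟩ := exists_pow_le_annihilator htorsion
  exact of_quotient (LinearMap.range k') (hA.range k' (hker_k' ▸ hk)) (of_pow_le_annihilator he i)

lemma of_free_of_isRegular [IsNoetherianRing R] {rs : List R} (hmem : ∀ r ∈ rs, r ∈ J)
    (hreg : RingTheory.Sequence.IsRegular R rs) (hJ : J ≠ ⊤) {i : ℕ} (hi : i < rs.length)
    (F : Type u) [AddCommGroup F] [Module R F] [Module.Free R F] [Module.Finite R F] :
    LocalCohomologyVanishes J i F := by
  refine .of_subsingleton fun j => subsingleton_ext_of_free ?_ F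
  have : Module.Finite R ((powerQuotients J).obj j) :=
    inferInstanceAs (Module.Finite R (R ⧸ J ^ j.unop))
  refine ModuleCat.subsingleton_ext_of_exists_isRegular J _ ?_ (ModuleCat.of R R) ?_ rs hmem hreg
    i hi
  · rw [Module.support_eq_zeroLocus, PrimeSpectrum.zeroLocus_subset_zeroLocus_iff]
    have hann : Module.annihilator R ((powerQuotients J).obj j) = J ^ j.unop :=
      Ideal.annihilator_quotient
    rw [hann]
    exact fun a ha => ⟨j.unop, Ideal.pow_mem_pow ha _⟩
  · rw [smul_eq_mul, Ideal.mul_top]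
    exact lt_top_iff_ne_top.2 hJ

end LocalCohomologyVanishes

end LocalCohomology

section Variables

variable {A σ : Type*} [CommRing A]

lemma X_mul_mem_ideal_span_X_image_iff {s : Set σ} {j : σ} (hj : j ∉ s) {p : MvPolynomial σ A} :
    MvPolynomial.X j * p ∈ Ideal.span (MvPolynomial.X '' s) ↔
      p ∈ Ideal.span (MvPolynomial.X '' s) := by
  classical
  refine ⟨fun h => ?_, Ideal.mul_mem_left _ _⟩
  rw [MvPolynomial.mem_ideal_span_X_image] at h ⊢
  intro e he
  obtain ⟨i, his, hi⟩ := h (Finsupp.single j 1 + e) (by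
    rwa [MvPolynomial.mem_support_iff, MvPolynomial.coeff_X_mul, ← MvPolynomial.mem_support_iff])
  have hij : j ≠ i := fun hji => hj (hji ▸ his)
  exact ⟨i, his, by simpa [Finsupp.single_apply, hij] using hi⟩

lemma isWeaklyRegular_map_X {l : List σ} (hl : l.Nodup) :
    RingTheory.Sequence.IsWeaklyRegular (MvPolynomial σ A)
      (l.map (MvPolynomial.X : σ → MvPolynomial σ A)) := by
  refine ⟨fun i h => ?_⟩
  have hspan : Ideal.ofList ((l.take i).map (MvPolynomial.X : σ → MvPolynomial σ A)) =
      Ideal.span (MvPolynomial.X '' {k | k ∈ l.take i}) := by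
    simp only [Ideal.ofList, List.mem_map, Set.image, Set.mem_ofPred_eq]
  rw [← List.map_take, hspan, isSMulRegular_iff_right_eq_zero_of_smul]
  intro x hx
  obtain ⟨p, rfl⟩ := Submodule.mkQ_surjective _ x
  rw [← map_smul] at hx
  simp only [Submodule.mkQ_apply, Submodule.Quotient.mk_eq_zero, List.getElem_map, smul_eq_mul,
    Ideal.mul_top] at hx ⊢
  refine (X_mul_mem_ideal_span_X_image_iff fun hmem => ?_).1 hx
  obtain ⟨k, hk, hki⟩ := List.mem_take_iff_getElem.1 hmem
  have hki' : k = i := (List.Nodup.getElem_inj_iff hl).1 hki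
  omega

end Variables

section ExteriorSquare

variable (R : Type*) [CommRing R] {L M : Type*} [AddCommGroup L] [Module R L] [AddCommGroup M]
  [Module R M]

/-- The exterior product `x ∧ y` of two vectors, as a bilinear map to the exterior square. -/
def wedge : L →ₗ[R] L →ₗ[R] ⋀[R]^2 L :=
  LinearMap.mk₂ R (fun x y => exteriorPower.ιMulti R 2 ![x, y])
    (fun _ _ _ => Subtype.ext (by simp [ExteriorAlgebra.ιMulti_apply, add_mul]))
    (fun _ _ _ => Subtype.ext (by simp [ExteriorAlgebra.ιMulti_apply]))
    (fun _ _ _ => Subtype.ext (by simp [ExteriorAlgebra.ιMulti_apply, mul_add]))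
    (fun _ _ _ => Subtype.ext (by simp [ExteriorAlgebra.ιMulti_apply]))

lemma wedge_isAlt : (wedge R : L →ₗ[R] L →ₗ[R] ⋀[R]^2 L).IsAlt := fun x =>
  Subtype.ext (by simp [wedge, ExteriorAlgebra.ιMulti_apply])

lemma ιMulti_eq_wedge (v : Fin 2 → L) : exteriorPower.ιMulti R 2 v = wedge R (v 0) (v 1) :=
  congrArg _ (FinVec.etaExpand_eq v).symm

variable {R}

lemma exteriorSquare_hom_ext {f g : ⋀[R]^2 L →ₗ[R] M}
    (h : ∀ x y, f (wedge R x y) = g (wedge R x y)) : f = g := by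
  refine exteriorPower.linearMap_ext (AlternatingMap.ext fun v => ?_)
  simp only [LinearMap.compAlternatingMap_apply, ιMulti_eq_wedge, h]

@[simp]
lemma map_wedge (f : L →ₗ[R] M) (x y : L) :
    exteriorPower.map 2 f (wedge R x y) = wedge R (f x) (f y) :=
  (exteriorPower.map_apply_ιMulti f _).trans (ιMulti_eq_wedge R _)

/-- The linear map on the exterior square induced by an alternating bilinear map. -/
def wedgeLift (B : L →ₗ[R] L →ₗ[R] M) (hB : B.IsAlt) : ⋀[R]^2 L →ₗ[R] M :=
  exteriorPower.alternatingMapLinearEquiv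
    { toFun := fun v => B (v 0) (v 1)
      map_update_add' := fun v i x y => by fin_cases i <;> simp
      map_update_smul' := fun v i c x => by fin_cases i <;> simp
      map_eq_zero_of_eq' := fun v i j h hij => by fin_cases i <;> fin_cases j <;> simp_all [hB _] }

@[simp]
lemma wedgeLift_wedge (B : L →ₗ[R] L →ₗ[R] M) (hB : B.IsAlt) (x y : L) :
    wedgeLift B hB (wedge R x y) = B x y :=
  exteriorPower.alternatingMapLinearEquiv_apply_ιMulti _ _

end ExteriorSquare

section SymmetricSquare

variable {R : Type*} [CommRing R] {L M : Type*} [AddCommGroup L] [Module R L] [AddCommGroup M]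
  [Module R M]

/-- The map `Λ²L → L ⊗ M`, `x ∧ y ↦ x ⊗ d y - y ⊗ d x`, induced by `d : L → M`. -/
def wedgeToTensor (d : L →ₗ[R] M) : ⋀[R]^2 L →ₗ[R] L ⊗[R] M :=
  wedgeLift ((TensorProduct.mk R L M).compl₂ d - ((TensorProduct.mk R L M).compl₂ d).flip)
    fun x => sub_self (x ⊗ₜ d x)

@[simp]
lemma wedgeToTensor_wedge (d : L →ₗ[R] M) (x y : L) :
    wedgeToTensor d (wedge R x y) = x ⊗ₜ d y - y ⊗ₜ d x :=
  wedgeLift_wedge (R := R) _ _ x y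

variable (R M) in
/-- The antisymmetrization `x ∧ y ↦ x ⊗ y - y ⊗ x`. -/
abbrev antisymmetrizer : ⋀[R]^2 M →ₗ[R] M ⊗[R] M := wedgeToTensor LinearMap.id

lemma antisymmetrizer_injective [Module.Free R M] : Function.Injective (antisymmetrizer R M) := by
  classical
  let b := Module.Free.chooseBasis R M
  let _ := IsWellOrder.linearOrder (WellOrderingRel (α := Module.Free.ChooseBasisIndex R M))
  let τ : M ⊗[R] M →ₗ[R] ⋀[R]^2 M := (b.tensorProduct b).constr R fun p =>
    if p.1 < p.2 then wedge R (b p.1) (b p.2) else 0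
  have hτ (i j) : τ (b i ⊗ₜ b j) = if i < j then wedge R (b i) (b j) else 0 := by
    rw [← b.tensorProduct_apply b, Module.Basis.constr_basis]
  have hbasis : (wedge R).compr₂ (τ ∘ₗ antisymmetrizer R M) = wedge R := by
    refine LinearMap.ext_basis b b fun i j => ?_
    simp only [LinearMap.compr₂_apply, LinearMap.comp_apply, wedgeToTensor_wedge,
      LinearMap.id_apply, map_sub, hτ]
    rcases lt_trichotomy i j with h | rfl | h
    · rw [if_pos h, if_neg h.asymm, sub_zero]
    · rw [sub_self, wedge_isAlt R (b i)]
    · rw [if_neg h.asymm, if_pos h, zero_sub, (wedge_isAlt R).neg]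
  have hretract : τ ∘ₗ antisymmetrizer R M = LinearMap.id :=
    exteriorSquare_hom_ext fun x y => LinearMap.congr_fun₂ hbasis x y
  exact Function.LeftInverse.injective (g := τ) (LinearMap.congr_fun hretract)

lemma comm_antisymmetrizer (w : ⋀[R]^2 M) :
    TensorProduct.comm R M M (antisymmetrizer R M w) = -antisymmetrizer R M w := by
  have h : (TensorProduct.comm R M M).toLinearMap ∘ₗ antisymmetrizer R M = -antisymmetrizer R M :=
    exteriorSquare_hom_ext fun x y => by simp
  exact LinearMap.congr_fun h w

variable (R M) in
/-- The symmetric square of `M`, as the cokernel of the antisymmetrization. -/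
abbrev SymmetricSquare : Type _ := (M ⊗[R] M) ⧸ LinearMap.range (antisymmetrizer R M)

/-- The map `L ⊗ M → S²M`, `x ⊗ y ↦ d x · y`, induced by `d : L → M`. -/
def tensorToSymm (d : L →ₗ[R] M) : L ⊗[R] M →ₗ[R] SymmetricSquare R M :=
  Submodule.mkQ _ ∘ₗ LinearMap.rTensor M d

lemma rTensor_wedgeToTensor (d : L →ₗ[R] M) (z : ⋀[R]^2 L) :
    LinearMap.rTensor M d (wedgeToTensor d z) = antisymmetrizer R M (exteriorPower.map 2 d z) := by
  have h : LinearMap.rTensor M d ∘ₗ wedgeToTensor d =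
      antisymmetrizer R M ∘ₗ exteriorPower.map 2 d :=
    exteriorSquare_hom_ext fun x y => by simp
  exact LinearMap.congr_fun h z

lemma range_wedgeToTensor_le_ker (d : L →ₗ[R] M) :
    LinearMap.range (wedgeToTensor d) ≤ LinearMap.ker (tensorToSymm d) := by
  rintro _ ⟨z, rfl⟩
  refine (Submodule.Quotient.mk_eq_zero _).2 ?_
  rw [rTensor_wedgeToTensor]
  exact ⟨_, rfl⟩

lemma range_map_subtype_ker_le_ker (d : L →ₗ[R] M) :
    LinearMap.range (exteriorPower.map 2 (LinearMap.ker d).subtype) ≤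
      LinearMap.ker (wedgeToTensor d) := by
  have h : wedgeToTensor d ∘ₗ exteriorPower.map 2 (LinearMap.ker d).subtype = 0 :=
    exteriorSquare_hom_ext fun x y => by simp
  exact LinearMap.range_le_ker_iff.2 h

lemma range_tensorToSymm_ne_top {A : Type*} [CommRing A] [Algebra R A] [Nontrivial A]
    {d : L →ₗ[R] M} {φ : M →ₗ[R] A} (hφ : Function.Surjective φ) (hφd : φ ∘ₗ d = 0) :
    LinearMap.range (tensorToSymm d) ≠ ⊤ := by
  let Φ : M ⊗[R] M →ₗ[R] A := LinearMap.mul' R A ∘ₗ TensorProduct.map φ φ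
  have hΦ : Φ ∘ₗ antisymmetrizer R M = 0 :=
    exteriorSquare_hom_ext fun x y => by simp [Φ, mul_comm]
  let Ψ : SymmetricSquare R M →ₗ[R] A := Submodule.liftQ _ Φ (LinearMap.range_le_ker_iff.2 hΦ)
  have hΨ : Ψ ∘ₗ tensorToSymm d = 0 := TensorProduct.ext' fun x y => by
    have hx : φ (d x) = 0 := LinearMap.congr_fun hφd x
    simp [Ψ, Φ, tensorToSymm, hx]
  obtain ⟨x, hx⟩ := hφ 1
  intro htop
  have hone : Ψ (Submodule.Quotient.mk (x ⊗ₜ x)) = 1 := by simp [Ψ, Φ, hx]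
  have hzero : Ψ (Submodule.Quotient.mk (x ⊗ₜ x)) = 0 :=
    LinearMap.range_le_ker_iff.2 hΨ (htop ▸ Submodule.mem_top)
  exact one_ne_zero (hone.symm.trans hzero)

end SymmetricSquare

section Homotopy

variable {R : Type*} [CommRing R] {L M : Type*} [AddCommGroup L] [Module R L] [AddCommGroup M]
  [Module R M] {d : L →ₗ[R] M} {s : M →ₗ[R] L} {a : R}

lemma exists_comp_eq_smul_id [Module.Projective R M] (h : ∀ x, a • x ∈ LinearMap.range d) :
    ∃ s : M →ₗ[R] L, d ∘ₗ s = a • LinearMap.id := by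
  obtain ⟨s, hs⟩ := Module.projective_lifting_property d.rangeRestrict
    ((a • LinearMap.id : M →ₗ[R] M).codRestrict _ h) d.surjective_rangeRestrict
  exact ⟨s, LinearMap.ext fun x => congrArg Subtype.val (LinearMap.congr_fun hs x)⟩

/-- The projection `a - s ∘ d` to the kernel of `d` determined by a null-homotopy `s` of
multiplication by `a`; it restricts to multiplication by `a` on the kernel. -/
def kerProjection (hs : d ∘ₗ s = a • LinearMap.id) : L →ₗ[R] LinearMap.ker d :=
  (a • LinearMap.id - s ∘ₗ d).codRestrict _ fun x => by
    simpa [sub_eq_zero] using (LinearMap.congr_fun hs (d x)).symm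

/-- The null-homotopy `x ⊗ y ↦ x ∧ s y` on the complex `Λ²L → L ⊗ M → S²M`. -/
def wedgeHomotopy (s : M →ₗ[R] L) : L ⊗[R] M →ₗ[R] ⋀[R]^2 L :=
  TensorProduct.lift ((wedge R).compl₂ s)

lemma smul_eq_zero_of_map_subtype_ker_eq_zero (hs : d ∘ₗ s = a • LinearMap.id)
    {w : ⋀[R]^2 (LinearMap.ker d)} (hw : exteriorPower.map 2 (LinearMap.ker d).subtype w = 0) :
    (a * a) • w = 0 := by
  have h : exteriorPower.map 2 (kerProjection hs) ∘ₗ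
      exteriorPower.map 2 (LinearMap.ker d).subtype = (a * a) • LinearMap.id := by
    have hker (x : LinearMap.ker d) : kerProjection hs x = a • x :=
      Subtype.ext (by simp [kerProjection])
    exact exteriorSquare_hom_ext fun x y => by simp [hker, mul_smul]
  rw [← LinearMap.id_apply (R := R) w, ← LinearMap.smul_apply, ← h, LinearMap.comp_apply, hw,
    map_zero]

lemma smul_mem_range_map_subtype_ker [Module.Free R M] (hs : d ∘ₗ s = a • LinearMap.id)
    {z : ⋀[R]^2 L} (hz : wedgeToTensor d z = 0) :
    (a * a) • z ∈ LinearMap.range (exteriorPower.map 2 (LinearMap.ker d).subtype) := by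
  have h : exteriorPower.map 2 (LinearMap.ker d).subtype ∘ₗ
      exteriorPower.map 2 (kerProjection hs) = (a * a) • LinearMap.id -
        a • wedgeHomotopy s ∘ₗ wedgeToTensor d +
        exteriorPower.map 2 s ∘ₗ exteriorPower.map 2 d := by
    refine exteriorSquare_hom_ext fun x y => ?_
    simp [kerProjection, wedgeHomotopy, mul_smul, smul_sub, ← (wedge_isAlt R).neg y (s (d x))]
    abel
  have hdz : exteriorPower.map 2 d z = 0 :=
    antisymmetrizer_injective (by rw [← rTensor_wedgeToTensor, hz, map_zero, map_zero])
  exact ⟨exteriorPower.map 2 (kerProjection hs) z, by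
    simpa [hz, hdz] using LinearMap.congr_fun h z⟩

lemma smul_mem_range_wedgeToTensor (hs : d ∘ₗ s = a • LinearMap.id) {q : L ⊗[R] M}
    (hq : tensorToSymm d q = 0) : (a * a) • q ∈ LinearMap.range (wedgeToTensor d) := by
  have hds (x : M) : d (s x) = a • x := LinearMap.congr_fun hs x
  have hhomotopy : wedgeToTensor d ∘ₗ wedgeHomotopy s = a • LinearMap.id -
      LinearMap.rTensor M s ∘ₗ (TensorProduct.comm R M M).toLinearMap ∘ₗ LinearMap.rTensor M d :=
    TensorProduct.ext' fun x y => by simp [wedgeHomotopy, hds]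
  have hmap : wedgeToTensor d ∘ₗ exteriorPower.map 2 s =
      a • LinearMap.rTensor M s ∘ₗ antisymmetrizer R M :=
    exteriorSquare_hom_ext fun x y => by simp [hds, smul_sub]
  obtain ⟨w, hw⟩ := (Submodule.Quotient.mk_eq_zero _).1 hq
  have hq₁ : wedgeToTensor d (wedgeHomotopy s q) =
      a • q + LinearMap.rTensor M s (antisymmetrizer R M w) := by
    simpa [← hw, comm_antisymmetrizer] using LinearMap.congr_fun hhomotopy q
  have hq₂ : wedgeToTensor d (exteriorPower.map 2 s w) =
      a • LinearMap.rTensor M s (antisymmetrizer R M w) := LinearMap.congr_fun hmap w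
  refine ⟨a • wedgeHomotopy s q - exteriorPower.map 2 s w, ?_⟩
  rw [map_sub, map_smul, hq₁, hq₂, smul_add, add_sub_cancel_right, mul_smul]

lemma smul_mem_range_tensorToSymm (hs : d ∘ₗ s = a • LinearMap.id) (v : SymmetricSquare R M) :
    a • v ∈ LinearMap.range (tensorToSymm d) := by
  obtain ⟨q, rfl⟩ := Submodule.mkQ_surjective _ v
  refine ⟨LinearMap.rTensor M s q, ?_⟩
  rw [tensorToSymm, LinearMap.comp_apply, ← LinearMap.rTensor_comp_apply, hs,
    LinearMap.rTensor_smul, LinearMap.smul_apply, map_smul, LinearMap.rTensor_id_apply]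

end Homotopy

lemma exists_surjective_to_quotient_maximal (R : Type*) [CommRing R] (N : Type*) [AddCommGroup N]
    [Module R N] [Module.Finite R N] [Nontrivial N] :
    ∃ (I : Ideal R) (β : N →ₗ[R] R ⧸ I), I.IsMaximal ∧ Function.Surjective β := by
  obtain ⟨P, hP⟩ := IsCoatomic.exists_coatom (Submodule R N)
  have : IsSimpleModule R (N ⧸ P) := isSimpleModule_iff_isCoatom.2 hP
  obtain ⟨I, hI, ⟨e⟩⟩ := isSimpleModule_iff_quot_maximal.1 this
  exact ⟨I, e.toLinearMap ∘ₗ P.mkQ, hI, e.surjective.comp P.mkQ_surjective⟩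

section Main

variable {R : Type u} [CommRing R] {J : Ideal R} {c : ℕ} {L₁ L₀ : Type u} [AddCommGroup L₁]
  [Module R L₁] [AddCommGroup L₀] [Module R L₀] [Module.Free R L₀] {d : L₁ →ₗ[R] L₀}

namespace LocalCohomologyVanishes

lemma symmetricSquare (hT : LocalCohomologyVanishes J 0 (L₀ ⊗[R] L₀))
    (hΛ : LocalCohomologyVanishes J 1 (⋀[R]^2 L₀)) :
    LocalCohomologyVanishes J 0 (SymmetricSquare R L₀) :=
  right antisymmetrizer_injective (Submodule.mkQ_surjective _)
    (LinearMap.exact_map_mkQ_range _) hT hΛ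

variable [IsNoetherianRing R]

lemma ker_wedgeToTensor (hd : ∀ a ∈ J ^ c, ∀ x, a • x ∈ LinearMap.range d) {i : ℕ}
    (h : LocalCohomologyVanishes J (i + 1) (⋀[R]^2 (LinearMap.ker d))) :
    LocalCohomologyVanishes J (i + 1) (LinearMap.ker (wedgeToTensor d)) := by
  have hs (a) (ha : a ∈ J ^ c) := exists_comp_eq_smul_id (hd a ha)
  have htorsion : ∀ a ∈ J ^ c, ∀ w : LinearMap.ker
      (exteriorPower.map 2 (LinearMap.ker d).subtype), (a * a) • w = 0 := fun a ha w =>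
    (hs a ha).elim fun _ has =>
      Subtype.ext (smul_eq_zero_of_map_subtype_ker_eq_zero has w.2)
  obtain ⟨e, he⟩ := exists_pow_le_annihilator (T := LinearMap.ker
    (exteriorPower.map 2 (LinearMap.ker d).subtype)) htorsion
  exact ker_of_exact_up_to_torsion (range_map_subtype_ker_le_ker d)
    (fun a ha _ hz => (hs a ha).elim fun _ has => smul_mem_range_map_subtype_ker has hz) h
    (of_pow_le_annihilator he (i + 1))

lemma ker_tensorToSymm (hd : ∀ a ∈ J ^ c, ∀ x, a • x ∈ LinearMap.range d) {i : ℕ}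
    (hΛ : LocalCohomologyVanishes J (i + 1) (⋀[R]^2 L₁))
    (h : LocalCohomologyVanishes J (i + 2) (⋀[R]^2 (LinearMap.ker d))) :
    LocalCohomologyVanishes J (i + 1) (LinearMap.ker (tensorToSymm d)) :=
  ker_of_exact_up_to_torsion (range_wedgeToTensor_le_ker d)
    (fun a ha _ hq => (exists_comp_eq_smul_id (hd a ha)).elim fun _ has =>
      smul_mem_range_wedgeToTensor has hq) hΛ (ker_wedgeToTensor hd h)

end LocalCohomologyVanishes

variable [IsNoetherianRing R] [Module.Finite R L₀] [Module.Free R L₁] [Module.Finite R L₁]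

lemma range_tensorToSymm_eq_top {rs : List R}
    (hmem : ∀ r ∈ rs, r ∈ J) (hreg : RingTheory.Sequence.IsRegular R rs) (hlen : 3 ≤ rs.length)
    (hJ : J ≠ ⊤) (hd : ∀ a ∈ J ^ c, ∀ x, a • x ∈ LinearMap.range d)
    (h : LocalCohomologyVanishes J 3 (⋀[R]^2 (LinearMap.ker d))) :
    LinearMap.range (tensorToSymm d) = ⊤ := by
  have hfree {i : ℕ} (hi : i < 3) (F : Type u) [AddCommGroup F] [Module R F] [Module.Free R F]
      [Module.Finite R F] : LocalCohomologyVanishes J i F :=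
    .of_free_of_isRegular hmem hreg hJ (hi.trans_le hlen) F
  have hker : LocalCohomologyVanishes J 2 (LinearMap.ker (tensorToSymm d)) :=
    .ker_tensorToSymm hd (hfree (by norm_num) _) h
  have hrange : LocalCohomologyVanishes J 1 (LinearMap.range (tensorToSymm d)) :=
    .range _ (hfree (by norm_num) _) hker
  have hcoker : LocalCohomologyVanishes J 0 (_ ⧸ LinearMap.range (tensorToSymm d)) :=
    .quotient _ (.symmetricSquare (hfree (by norm_num) _) (hfree (by norm_num) _)) hrange
  have hann : J ^ c ≤ Module.annihilator R (_ ⧸ LinearMap.range (tensorToSymm d)) := by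
    refine fun a ha => Module.mem_annihilator.2 fun q => ?_
    obtain ⟨v, rfl⟩ := Submodule.mkQ_surjective _ q
    obtain ⟨s, hs⟩ := exists_comp_eq_smul_id (hd a ha)
    rw [← map_smul]
    exact (Submodule.Quotient.mk_eq_zero _).2 (smul_mem_range_tensorToSymm hs v)
  exact Submodule.Quotient.subsingleton_iff.1 (hcoker.subsingleton_of_pow_le_annihilator hann)

theorem wedge2_first_syzygy_nonvanishing_general {rs : List R} (hmem : ∀ r ∈ rs, r ∈ J)
    (hreg : RingTheory.Sequence.IsWeaklyRegular R rs) (hlen : 3 ≤ rs.length) {N : Type u}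
    [AddCommGroup N] [Module R N] [Nontrivial N] (hc : J ^ c ≤ Module.annihilator R N)
    {ε : L₀ →ₗ[R] N} (hε : Function.Surjective ε)
    (hd : LinearMap.range d = LinearMap.ker ε) :
    ¬ Subsingleton
      ((localCohomology J 3).obj (ModuleCat.of R (⋀[R]^2 (LinearMap.ker d)))) := by
  intro hsub
  have hann : Module.annihilator R N ≠ ⊤ := fun h =>
    not_subsingleton N (Module.annihilator_eq_top_iff.1 h)
  have hJ : J ≠ ⊤ := by
    rintro rfl
    exact hann (top_le_iff.1 (by simpa only [Ideal.top_pow] using hc))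
  have hle : Ideal.ofList rs ≤ J := Ideal.span_le.2 hmem
  have hreg' : RingTheory.Sequence.IsRegular R rs :=
    ⟨hreg, fun h => hJ (top_le_iff.1 (h.trans_le (Ideal.mul_le_left.trans hle)))⟩
  have htorsion (a : R) (ha : a ∈ J ^ c) (x : L₀) : a • x ∈ LinearMap.range d := by
    rw [hd, LinearMap.mem_ker, map_smul, Module.mem_annihilator.1 (hc ha)]
  have : Module.Finite R N := .of_surjective ε hε
  obtain ⟨I, β, hI, hβ⟩ := exists_surjective_to_quotient_maximal R N
  have hβεd : (β ∘ₗ ε) ∘ₗ d = 0 := by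
    rw [LinearMap.comp_assoc, LinearMap.range_le_ker_iff.1 hd.le, LinearMap.comp_zero]
  exact range_tensorToSymm_ne_top (φ := β ∘ₗ ε) (hβ.comp hε) hβεd
    (range_tensorToSymm_eq_top hmem hreg' hlen hJ htorsion
      (localCohomologyVanishes_of_subsingleton hsub))

end Main

/-- Whether `N` is cyclic or not, for any nonzero finite length
graded `S`-module `N` on `ℙⁿ` (`n ≥ 3`), the first syzygy bundle `P₁(N)` satisfies
`H²_*(Λ²P₁(N)) ≠ 0`. -/
theorem wedge2_first_syzygy_nonvanishing
    (K : Type) [Field K] (n : ℕ) (hn : 3 ≤ n)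
    (N : Type) [AddCommGroup N] [Module (PolyS K n) N]
    (hN : Nontrivial N)
    (hNfl : IsGradedFiniteLength K n N)
    (res : MinimalResolution K n N) :
    ¬ Subsingleton (Hstar K n 2 (⋀[PolyS K n]^2 ↥(LinearMap.range (res.d 1)))) := by
  obtain ⟨-, c, hc⟩ := hNfl
  have := res.free 0
  have := res.free 1
  have := res.finite 0
  have := res.finite 1
  have hX : ∀ r ∈ (List.finRange (n + 1)).map MvPolynomial.X, r ∈ irrel K n := by
    simp only [List.mem_map]
    rintro _ ⟨i, -, rfl⟩
    exact Ideal.subset_span ⟨i, rfl⟩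
  have hsyzygy : LinearMap.range (res.d 1) = LinearMap.ker (res.d 0) := res.exact 0
  rw [hsyzygy]
  exact wedge2_first_syzygy_nonvanishing_general hX
    (isWeaklyRegular_map_X (List.nodup_finRange _)) (by simpa using hn.trans n.le_succ) hc
    res.aug_surjective res.exact0
end
end

section
/- (Jyotilingam-type nonvanishing) Let N be a finite length graded S-module with k-th syzygy bundle P_k on P^n, k ≥ 1. Let Q be a vector bundle on P^n with H^l_*(Q) = M ≠ 0 for some l with k ≤ l ≤ n-2, and H^i_*(Q) = 0 for i = l-1, l-2, ..., l-k+2. Then H^{l+1}_*(P_k ⊗ Q) ≠ 0. -/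
/-!
Background setup (the paper works on projective space `ℙⁿ` over a field `K`):
we encode a coherent sheaf on `ℙⁿ_K` by a module `M` over the homogeneous coordinate
ring `S = K[X₀,…,Xₙ]` (namely `M = Γ_*` of the sheaf), and the intermediate cohomology
module `H^i_*(F) = ⊕_ν H^i(ℙⁿ, F(ν))` (for `i ≥ 1`) by the local cohomology module
`H^{i+1}_𝔪(M)` at the irrelevant maximal ideal `𝔪 = (X₀,…,Xₙ)`, to which it is
canonically isomorphic.
-/

open CategoryTheory TensorProduct

noncomputable section

variable (K : Type) [Field K] (n : ℕ)

/-!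
Write `H^i` for local cohomology at `𝔪`, put `M = H^{l+1}(Q)` and suppose `H^{l+2}(P_k ⊗ Q) = 0`.

A module all of whose elements are killed by powers of `𝔪` has no higher local cohomology, and as
`Q` is a bundle, `0 → P_{j+1} → L_j → P_j → 0` stays exact on tensoring with `Q` up to such a
module. Chasing the resulting long exact sequences, with `H^i(L_j ⊗ Q) = L_j ⊗ H^i(Q)` and the
vanishing hypotheses on `Q`, shows that `L_• ⊗ M` is exact at the spot `k - 1`, that is,
`Tor_{k-1}(N, M) = 0`.

On the other hand, multiplication on `Q` by an element of a suitable power of `𝔪` factors through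
a finite free module, whose local cohomology vanishes below degree `n + 1` as the variables form a
regular sequence. Hence `M`, like `N`, is killed by a power of `𝔪`. Nonzero modules `N`, `M` of
this kind have `Tor_j(N, M) ≠ 0` for `j ≤ n + 1`. For `j = 0` this is Nakayama's lemma. For the
inductive step replace `M` by `D = M[T]`, with one variable `X_r` now acting as `T`. In
`0 → D → D → M → 0` the first map is `T - X_r`. It acts nilpotently on `Tor_j(N, D)`, because `T`
does so through `N` and `X_r` through `M`, and if `Tor_{j+1}(N, M) = 0` it is also injective there,
so that `Tor_j(N, D) = 0`.
-/

universe u v w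

namespace Jyotilingam

open Abelian Limits Opposite

section DerivedExt

variable {R : Type u} [CommRing R] {i : ℕ} {X X' Y : ModuleCat.{u} R}

/-- `Ext^i(X, Y)` as a value of the derived functor `_root_.Ext`, which is the version that
`localCohomology` is built from. -/
abbrev DerivedExt (i : ℕ) (X Y : ModuleCat.{u} R) : ModuleCat.{u} R :=
  ((_root_.Ext R (ModuleCat.{u} R) i).obj (op X)).obj Y

/-- The cycle of `Hom(P, Y)` given by a cocycle `f`. -/
def homCycle (P : ProjectiveResolution X) (f : P.complex.X i ⟶ Y)
    (hf : P.complex.d (i + 1) i ≫ f = 0) : (P.complex.linearYonedaObj R Y).cycles i :=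
  (P.complex.linearYonedaObj R Y).cyclesMk f (i + 1) (by simp) hf

lemma iCycles_homCycle (P : ProjectiveResolution X) (f : P.complex.X i ⟶ Y)
    (hf : P.complex.d (i + 1) i ≫ f = 0) :
    (P.complex.linearYonedaObj R Y).iCycles i (homCycle P f hf) = f :=
  (P.complex.linearYonedaObj R Y).i_cyclesMk _ _ _ _

/-- The class in the derived-functor `Ext` of a cocycle on a projective resolution, the counterpart
of `ProjectiveResolution.extMk` for `Abelian.Ext`. -/
def derivedExtMk (P : ProjectiveResolution X) (f : P.complex.X i ⟶ Y)
    (hf : P.complex.d (i + 1) i ≫ f = 0) : DerivedExt i X Y :=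
  (P.isoExt i Y).inv ((P.complex.linearYonedaObj R Y).homologyπ i (homCycle P f hf))

lemma iCycles_injective {ι : Type*} {c : ComplexShape ι}
    (C : HomologicalComplex (ModuleCat.{u} R) c) (i : ι) : Function.Injective (C.iCycles i) :=
  (ModuleCat.mono_iff_injective _).1 inferInstance

lemma derivedExtMk_surjective (P : ProjectiveResolution X) (x : DerivedExt i X Y) :
    ∃ f hf, derivedExtMk P f hf = x := by
  obtain ⟨z, hz⟩ := (ModuleCat.epi_iff_surjective
    ((P.complex.linearYonedaObj R Y).homologyπ i)).1 inferInstance ((P.isoExt i Y).hom x)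
  have hd : P.complex.d (i + 1) i ≫ (P.complex.linearYonedaObj R Y).iCycles i z = 0 :=
    congr($((P.complex.linearYonedaObj R Y).iCycles_d i (i + 1)) z)
  refine ⟨_, hd, ?_⟩
  have hcyc : homCycle P _ hd = z := iCycles_injective _ _ (iCycles_homCycle _ _ _)
  simp only [derivedExtMk, hcyc, hz, Iso.hom_inv_id_apply]

lemma homologyπ_eq_zero_iff {ι : Type*} {c : ComplexShape ι}
    (C : HomologicalComplex (ModuleCat.{u} R) c) {i j : ι} (hij : c.prev j = i) (z : C.cycles j) :
    C.homologyπ j z = 0 ↔ ∃ x, C.d i j x = C.iCycles j z := by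
  have hex : (ShortComplex.mk _ _ (C.toCycles_comp_homologyπ i j)).Exact :=
    ShortComplex.exact_of_g_is_cokernel _ (C.homologyIsCokernel i j hij)
  have hd (x) : C.iCycles j (C.toCycles i j x) = C.d i j x := congr($(C.toCycles_i i j) x)
  refine (((ShortComplex.ShortExact.moduleCat_exact_iff_function_exact _).1 hex) z).trans ?_
  exact exists_congr fun x ↦ by
    rw [← hd]
    exact (iCycles_injective C j).eq_iff.symm

lemma derivedExtMk_eq_zero_iff (P : ProjectiveResolution X) (f : P.complex.X (i + 1) ⟶ Y)
    (hf : P.complex.d (i + 1 + 1) (i + 1) ≫ f = 0) :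
    derivedExtMk P f hf = 0 ↔ ∃ g, P.complex.d (i + 1) i ≫ g = f := by
  have hinj : Function.Injective (P.isoExt (R := R) (i + 1) Y).inv :=
    (ModuleCat.mono_iff_injective _).1 inferInstance
  rw [derivedExtMk, map_eq_zero_iff _ hinj, homologyπ_eq_zero_iff _ (i := i) (by simp),
    iCycles_homCycle]
  rfl

/-- The map `Hom(P, Y) ⟶ Hom(P', Y)` induced by a morphism of complexes `P' ⟶ P`. -/
def linearYonedaMap {α : Type*} [AddRightCancelSemigroup α] [One α]
    {C C' : ChainComplex (ModuleCat.{u} R) α} (φ : C' ⟶ C) (Y : ModuleCat.{u} R) :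
    C.linearYonedaObj R Y ⟶ C'.linearYonedaObj R Y :=
  (HomologicalComplex.unopFunctor _ _).map
    ((((linearYoneda R (ModuleCat.{u} R)).obj Y).rightOp.mapHomologicalComplex _).map φ).op

lemma isoExt_hom_naturality {P : ProjectiveResolution X} {P' : ProjectiveResolution X'}
    {g : X' ⟶ X} (φ : ProjectiveResolution.Hom P' P g) :
    ((_root_.Ext R (ModuleCat.{u} R) i).map g.op).app Y ≫ (P'.isoExt i Y).hom =
      (P.isoExt i Y).hom ≫ HomologicalComplex.homologyMap (linearYonedaMap φ.hom Y) i := by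
  let F := ((linearYoneda R (ModuleCat.{u} R)).obj Y).rightOp
  have h₁ : (((_root_.Ext R (ModuleCat.{u} R) i).map g.op).app Y) ≫
      (P'.isoLeftDerivedObj F i).inv.unop = (P.isoLeftDerivedObj F i).inv.unop ≫
        (HomologicalComplex.homologyMap ((F.mapHomologicalComplex _).map φ.hom) i).unop :=
    congrArg Quiver.Hom.unop (ProjectiveResolution.isoLeftDerivedObj_inv_naturality g P' P φ.hom
      (by simpa using φ.hom_f_zero_comp_π_f_zero) F i)
  have h₂ : (HomologicalComplex.homologyUnop ((F.mapHomologicalComplex _).obj P.complex) i).hom ≫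
      (HomologicalComplex.homologyMap ((F.mapHomologicalComplex _).map φ.hom) i).unop =
      HomologicalComplex.homologyMap (linearYonedaMap φ.hom Y) i ≫
        (HomologicalComplex.homologyUnop ((F.mapHomologicalComplex _).obj P'.complex) i).hom :=
    congrArg Quiver.Hom.unop
      (HomologicalComplex.homologyOp_hom_naturality (linearYonedaMap φ.hom Y) i)
  exact ((CommSq.mk h₁.symm).horiz_comp (CommSq.mk h₂).horiz_inv).w.symm

lemma map_derivedExtMk {P : ProjectiveResolution X} {P' : ProjectiveResolution X'}
    {g : X' ⟶ X} (φ : ProjectiveResolution.Hom P' P g) (f : P.complex.X i ⟶ Y)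
    (hf : P.complex.d (i + 1) i ≫ f = 0) :
    ((_root_.Ext R (ModuleCat.{u} R) i).map g.op).app Y (derivedExtMk P f hf) =
      derivedExtMk P' (φ.hom.f i ≫ f) (by
        rw [← HomologicalComplex.Hom.comm_assoc, hf, comp_zero]) := by
  have hcyc : HomologicalComplex.cyclesMap (linearYonedaMap φ.hom Y) i (homCycle P f hf) =
      homCycle P' (φ.hom.f i ≫ f) (by rw [← HomologicalComplex.Hom.comm_assoc, hf, comp_zero]) := by
    apply iCycles_injective
    rw [iCycles_homCycle]
    refine (congr($(HomologicalComplex.cyclesMap_i (linearYonedaMap φ.hom Y) i) _)).trans ?_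
    exact congrArg (φ.hom.f i ≫ ·) (iCycles_homCycle P f hf)
  have hinj : Function.Injective (P'.isoExt (R := R) i Y).hom :=
    (ModuleCat.mono_iff_injective _).1 inferInstance
  apply hinj
  have h := congr($(isoExt_hom_naturality (i := i) (Y := Y) φ) (derivedExtMk P f hf))
  have h' := congr($(HomologicalComplex.homologyπ_naturality (linearYonedaMap φ.hom Y) i)
    (homCycle P f hf))
  simp only [derivedExtMk, ModuleCat.comp_apply, Iso.inv_hom_id_apply] at h h' ⊢
  rw [h, h', hcyc]

lemma map_derivedExtMk_eq_zero_iff (P : ProjectiveResolution X) (g : X' ⟶ X)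
    (f : P.complex.X (i + 1) ⟶ Y) (hf : P.complex.d (i + 1 + 1) (i + 1) ≫ f = 0) :
    ((_root_.Ext R (ModuleCat.{u} R) (i + 1)).map g.op).app Y (derivedExtMk P f hf) = 0 ↔
      (Ext.mk₀ g).comp (P.extMk f (i + 1 + 1) rfl hf) (zero_add _) = 0 := by
  let P' := projectiveResolution X'
  let φ : ProjectiveResolution.Hom P' P g :=
    { hom := ProjectiveResolution.lift g P' P
      hom_f_zero_comp_π_f_zero := by simpa using ProjectiveResolution.lift_commutes_zero g P' P }
  rw [ProjectiveResolution.mk₀_comp_extMk f _ rfl hf φ,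
    ProjectiveResolution.extMk_eq_zero_iff _ _ _ rfl _ i rfl, map_derivedExtMk φ,
    derivedExtMk_eq_zero_iff]

end DerivedExt

section LocalExt

lemma subsingleton_pt_iff {R : Type u} [CommRing R] {I : Type} [SmallCategory I] [IsFiltered I]
    {F : I ⥤ ModuleCat.{u} R} {c : Cocone F} (hc : IsColimit c) :
    Subsingleton c.pt ↔ ∀ j (x : F.obj j), ∃ (k : I) (f : j ⟶ k), F.map f x = 0 := by
  have : PreservesFilteredColimitsOfSize.{0, 0} (forget (ModuleCat.{u} R)) :=
    preservesFilteredColimitsOfSize_shrink.{0, u, 0, u} _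
  constructor
  · intro hs j x
    obtain ⟨k, f, g, hfg⟩ := (Concrete.isColimit_rep_eq_iff_exists F hc x (0 : F.obj j)).1
      (hs.elim _ _)
    exact ⟨k, f, hfg.trans (map_zero (F.map g).hom)⟩
  · intro h
    refine subsingleton_of_forall_eq 0 fun y ↦ ?_
    obtain ⟨j, x, rfl⟩ := Concrete.isColimit_exists_rep F hc y
    obtain ⟨k, f, hx⟩ := h j x
    rw [← c.w f, ModuleCat.comp_apply, hx, map_zero]

variable {R : Type u} [CommRing R] (J : Ideal R)

/-- `R/J^t`, as an object of the category of modules. -/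
abbrev quotPow (t : ℕ) : ModuleCat.{u} R := ModuleCat.of R (R ⧸ J ^ t)

/-- The projection `R/J^t' ⟶ R/J^t` for `t ≤ t'`. -/
def quotPowMap {t t' : ℕ} (h : t ≤ t') : quotPow J t' ⟶ quotPow J t :=
  ModuleCat.ofHom (Submodule.mapQ _ _ LinearMap.id (Ideal.pow_le_pow_right h))

lemma quotPowMap_refl (t : ℕ) : quotPowMap J (le_refl t) = 𝟙 _ := by
  ext
  rfl

lemma quotPowMap_comp {a b c : ℕ} (h : a ≤ b) (h' : b ≤ c) :
    quotPowMap J h' ≫ quotPowMap J h = quotPowMap J (h.trans h') := by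
  ext
  rfl

lemma subsingleton_localCohomology_iff_derivedExt (i : ℕ) (M : ModuleCat.{u} R) :
    Subsingleton ((localCohomology J i).obj M) ↔
      ∀ (t : ℕ) (x : DerivedExt i (quotPow J t) M), ∃ (t' : ℕ) (h : t ≤ t'),
        ((_root_.Ext R (ModuleCat.{u} R) i).map (quotPowMap J h).op).app M x = 0 := by
  let D := localCohomology.diagram (localCohomology.idealPowersDiagram J) i
  have : HasColimit D := localCohomology.hasColimitDiagram.{u, 0} _ _
  let ev := (evaluation (ModuleCat.{u} R) (ModuleCat.{u} R)).obj M
  refine (subsingleton_pt_iff (isColimitOfPreserves ev (colimit.isColimit D))).trans ⟨?_, ?_⟩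
  · intro h t x
    obtain ⟨k, f, hf⟩ := h (op (op t)) x
    exact ⟨k.unop.unop, f.unop.unop.down.down, hf⟩
  · intro h k x
    obtain ⟨t', ht, hx⟩ := h k.unop.unop x
    exact ⟨op (op t'), (homOfLE ht).op.op, hx⟩

lemma subsingleton_localCohomology_iff_ext (i : ℕ) (M : ModuleCat.{u} R) :
    Subsingleton ((localCohomology J (i + 1)).obj M) ↔
      ∀ (t : ℕ) (e : Ext.{u} (quotPow J t) M (i + 1)), ∃ (t' : ℕ) (h : t ≤ t'),
        (Ext.mk₀ (quotPowMap J h)).comp e (zero_add _) = 0 := by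
  rw [subsingleton_localCohomology_iff_derivedExt]
  constructor
  · intro h t e
    let P := projectiveResolution (quotPow J t)
    obtain ⟨f, hf, rfl⟩ := P.extMk_surjective e _ rfl
    obtain ⟨t', ht, h₀⟩ := h t (derivedExtMk P f hf)
    exact ⟨t', ht, (map_derivedExtMk_eq_zero_iff P _ f hf).1 h₀⟩
  · intro h t x
    let P := projectiveResolution (quotPow J t)
    obtain ⟨f, hf, rfl⟩ := derivedExtMk_surjective P x
    obtain ⟨t', ht, h₀⟩ := h t (P.extMk f _ rfl hf)
    exact ⟨t', ht, (map_derivedExtMk_eq_zero_iff P _ f hf).2 h₀⟩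

variable (i : ℕ) (M : Type u) [AddCommGroup M] [Module R M]

/-- The transition map `Ext^i(R/J^t, M) → Ext^i(R/J^t', M)` for `t ≤ t'`. -/
def extQuotPowMap {t t' : ℕ} (h : t ≤ t') :
    Ext.{u} (quotPow J t) (ModuleCat.of R M) i →ₗ[R] Ext.{u} (quotPow J t') (ModuleCat.of R M) i :=
  (Ext.mk₀ (quotPowMap J h)).precompOfLinear R _ (zero_add _)

lemma extQuotPowMap_apply {t t' : ℕ} (h : t ≤ t')
    (e : Ext.{u} (quotPow J t) (ModuleCat.of R M) i) :
    extQuotPowMap J i M h e = (Ext.mk₀ (quotPowMap J h)).comp e (zero_add _) := rfl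

instance : DirectedSystem (fun t ↦ Ext.{u} (quotPow J t) (ModuleCat.of R M) i)
    (fun _ _ h ↦ extQuotPowMap J i M h) where
  map_self t e := by
    rw [extQuotPowMap_apply, quotPowMap_refl, Ext.mk₀_id_comp]
  map_map a b c hab hbc e := by
    simp only [extQuotPowMap_apply]
    rw [← Ext.comp_assoc_of_second_deg_zero, Ext.mk₀_comp_mk₀, quotPowMap_comp]

/-- Local cohomology `H^i_J(M)` as the direct limit of `Ext^i(R/J^t, M)` for `Abelian.Ext`, whose
long exact sequences are available. -/
def LocalExt : Type u :=
  Module.DirectLimit (fun t ↦ Ext.{u} (quotPow J t) (ModuleCat.of R M) i)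
    (fun _ _ h ↦ extQuotPowMap J i M h)

namespace LocalExt

instance : AddCommGroup (LocalExt J i M) :=
  inferInstanceAs (AddCommGroup (Module.DirectLimit _ _))

instance : Module R (LocalExt J i M) :=
  inferInstanceAs (Module R (Module.DirectLimit _ _))

/-- The class in `H^i_J(M)` of an element of `Ext^i(R/J^t, M)`. -/
def of (t : ℕ) : Ext.{u} (quotPow J t) (ModuleCat.of R M) i →ₗ[R] LocalExt J i M :=
  Module.DirectLimit.of R ℕ _ (fun _ _ h ↦ extQuotPowMap J i M h) t

lemma of_extQuotPowMap {t t' : ℕ} (h : t ≤ t') (e : Ext.{u} (quotPow J t) (ModuleCat.of R M) i) :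
    of J i M t' (extQuotPowMap J i M h e) = of J i M t e :=
  Module.DirectLimit.of_f

variable {J i M}

lemma exists_of (z : LocalExt J i M) : ∃ t e, of J i M t e = z :=
  Module.DirectLimit.exists_of z

lemma exists_of_eq_zero {t : ℕ} {e : Ext.{u} (quotPow J t) (ModuleCat.of R M) i}
    (h : of J i M t e = 0) : ∃ (t' : ℕ) (h : t ≤ t'), extQuotPowMap J i M h e = 0 :=
  Module.DirectLimit.of.zero_exact h

lemma subsingleton_iff : Subsingleton (LocalExt J i M) ↔
    ∀ (t : ℕ) (e : Ext.{u} (quotPow J t) (ModuleCat.of R M) i), ∃ (t' : ℕ) (h : t ≤ t'),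
      extQuotPowMap J i M h e = 0 := by
  refine ⟨fun _ t e ↦ exists_of_eq_zero (Subsingleton.elim _ _), fun h ↦ ?_⟩
  refine subsingleton_of_forall_eq 0 fun z ↦ ?_
  obtain ⟨t, e, rfl⟩ := exists_of z
  obtain ⟨t', ht, he⟩ := h t e
  rw [← of_extQuotPowMap J i M ht, he, map_zero]

lemma subsingleton_localCohomology_iff :
    Subsingleton ((localCohomology J (i + 1)).obj (ModuleCat.of R M)) ↔
      Subsingleton (LocalExt J (i + 1) M) := by
  rw [subsingleton_iff, subsingleton_localCohomology_iff_ext]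
  rfl

variable {N P : Type u} [AddCommGroup N] [Module R N] [AddCommGroup P] [Module R P]

/-- The map `H^i_J(M) → H^{i+d}_J(N)` given by composition with a class in `Ext^d(M, N)`. -/
def postcomp {i j d : ℕ} (β : Ext.{u} (ModuleCat.of R M) (ModuleCat.of R N) d) (h : i + d = j) :
    LocalExt J i M →ₗ[R] LocalExt J j N :=
  Module.DirectLimit.map (fun t ↦ β.postcompOfLinear R (quotPow J t) h) fun a b hab ↦ by
    ext e
    simp only [LinearMap.comp_apply, LinearMap.flip_apply, Ext.bilinearCompOfLinear_apply_apply,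
      extQuotPowMap_apply]
    rw [Ext.comp_assoc _ _ _ (zero_add i) h (by lia)]

lemma postcomp_of {i j d : ℕ} (β : Ext.{u} (ModuleCat.of R M) (ModuleCat.of R N) d) (h : i + d = j)
    (t : ℕ) (e : Ext.{u} (quotPow J t) (ModuleCat.of R M) i) :
    postcomp β h (of J i M t e) = of J j N t (e.comp β h) :=
  Module.DirectLimit.map_apply_of _ _ _

lemma postcomp_postcomp {i j k a b c : ℕ} (β : Ext.{u} (ModuleCat.of R M) (ModuleCat.of R N) a)
    (γ : Ext.{u} (ModuleCat.of R N) (ModuleCat.of R P) b) (hj : i + a = j) (hk : j + b = k)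
    (hc : a + b = c) (z : LocalExt J i M) :
    postcomp γ hk (postcomp β hj z) = postcomp (β.comp γ hc) (by lia : i + c = k) z := by
  obtain ⟨t, e, rfl⟩ := exists_of z
  simp only [postcomp_of]
  rw [Ext.comp_assoc _ _ _ hj hc (by lia)]

lemma postcomp_zero {i j d : ℕ} (h : i + d = j) (z : LocalExt J i M) :
    postcomp (0 : Ext.{u} (ModuleCat.of R M) (ModuleCat.of R N) d) h z = 0 := by
  obtain ⟨t, e, rfl⟩ := exists_of z
  rw [postcomp_of, Ext.comp_zero, map_zero]

lemma postcomp_exact {i j k a b c : ℕ} {β : Ext.{u} (ModuleCat.of R M) (ModuleCat.of R N) a}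
    {γ : Ext.{u} (ModuleCat.of R N) (ModuleCat.of R P) b} (hj : i + a = j) (hk : j + b = k)
    (hc : a + b = c) (hβγ : β.comp γ hc = 0)
    (h : ∀ (t : ℕ) (e : Ext.{u} (quotPow J t) (ModuleCat.of R N) j), e.comp γ hk = 0 →
      ∃ e' : Ext.{u} (quotPow J t) (ModuleCat.of R M) i, e'.comp β hj = e) :
    Function.Exact (postcomp (J := J) β hj) (postcomp (J := J) γ hk) := by
  intro z
  constructor
  · intro hz
    obtain ⟨t, e, rfl⟩ := exists_of z
    rw [postcomp_of] at hz
    obtain ⟨t', ht, h₀⟩ := exists_of_eq_zero hz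
    have he : (extQuotPowMap J j N ht e).comp γ hk = 0 := by
      rw [extQuotPowMap_apply, Ext.comp_assoc _ _ _ (zero_add j) hk (by lia)]
      exact h₀
    obtain ⟨e', he'⟩ := h t' _ he
    exact ⟨of J i M t' e', by rw [postcomp_of, he', of_extQuotPowMap]⟩
  · rintro ⟨w, rfl⟩
    rw [postcomp_postcomp _ _ _ _ hc, hβγ, postcomp_zero]

variable (J i) in
/-- The map `H^i_J(M) → H^i_J(N)` induced by a linear map, depending linearly on it. -/
def map : (M →ₗ[R] N) →ₗ[R] LocalExt J i M →ₗ[R] LocalExt J i N where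
  toFun f := postcomp (Ext.mk₀ (ModuleCat.ofHom f)) (add_zero i)
  map_add' f g := by
    ext z
    obtain ⟨t, e, rfl⟩ := exists_of z
    simp only [postcomp_of, LinearMap.add_apply, ModuleCat.ofHom_add, Ext.mk₀_add, Ext.comp_add,
      map_add]
  map_smul' r f := by
    ext z
    obtain ⟨t, e, rfl⟩ := exists_of z
    simp only [postcomp_of, LinearMap.smul_apply, RingHom.id_apply, ← map_smul]
    rw [show ModuleCat.ofHom (r • f) = r • ModuleCat.ofHom f from rfl, Ext.mk₀_smul, Ext.comp_smul]

lemma map_of (f : M →ₗ[R] N) (t : ℕ) (e : Ext.{u} (quotPow J t) (ModuleCat.of R M) i) :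
    map J i f (of J i M t e) =
      of J i N t (e.comp (Ext.mk₀ (ModuleCat.ofHom f)) (add_zero i)) :=
  postcomp_of _ _ _ _

lemma map_comp_apply (g : N →ₗ[R] P) (f : M →ₗ[R] N) (z : LocalExt J i M) :
    map J i (g ∘ₗ f) z = map J i g (map J i f z) := by
  obtain ⟨t, e, rfl⟩ := exists_of z
  simp only [map_of]
  rw [Ext.comp_assoc_of_third_deg_zero, Ext.mk₀_comp_mk₀, ModuleCat.ofHom_comp]

lemma map_id_apply (z : LocalExt J i M) : map J i LinearMap.id z = z := by
  obtain ⟨t, e, rfl⟩ := exists_of z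
  rw [map_of, ModuleCat.ofHom_id, Ext.comp_mk₀_id]

lemma map_smul_id_apply (r : R) (z : LocalExt J i M) :
    map J i (r • (LinearMap.id : M →ₗ[R] M)) z = r • z := by
  rw [map_smul, LinearMap.smul_apply, map_id_apply]

lemma exists_pow_smul_eq_zero (z : LocalExt J i M) : ∃ t, ∀ r ∈ J ^ t, r • z = 0 := by
  obtain ⟨t, e, rfl⟩ := exists_of z
  refine ⟨t, fun r hr ↦ ?_⟩
  have hr₀ : r • 𝟙 (quotPow J t) = 0 := by
    ext
    exact Ideal.Quotient.eq_zero_iff_mem.2 (Ideal.mul_mem_right _ _ hr)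
  rw [← map_smul, ← Ext.mk₀_id_comp e, ← Ext.smul_comp, ← Ext.mk₀_smul, hr₀, Ext.mk₀_zero,
    Ext.zero_comp, map_zero]

lemma subsingleton_of_injective [Module.Injective R M] : Subsingleton (LocalExt J (i + 1) M) := by
  have : Injective (ModuleCat.of R M) := Module.injective_object_of_injective_module R M
  exact subsingleton_iff.2 fun t e ↦ ⟨t, le_rfl, by rw [Ext.eq_zero_of_injective e, map_zero]⟩

lemma map_zero_injective {f : M →ₗ[R] N} (hf : Function.Injective f) :
    Function.Injective (map J 0 f) := by
  rw [injective_iff_map_eq_zero]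
  intro z hz
  obtain ⟨t, e, rfl⟩ := exists_of z
  rw [map_of] at hz
  obtain ⟨t', ht, h₀⟩ := exists_of_eq_zero hz
  have : Mono (ModuleCat.ofHom f) := (ModuleCat.mono_iff_injective _).2 hf
  have he : extQuotPowMap J 0 M ht e = 0 :=
    Ext.postcomp_mk₀_injective_of_mono (quotPow J t') (ModuleCat.ofHom f) (by
      simpa [extQuotPowMap_apply, Ext.comp_assoc_of_third_deg_zero] using h₀)
  rw [← of_extQuotPowMap J 0 M ht, he, map_zero]

section ShortExact

variable {A B C : Type u} [AddCommGroup A] [Module R A] [AddCommGroup B] [Module R B]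
  [AddCommGroup C] [Module R C] {f : A →ₗ[R] B} {g : B →ₗ[R] C}

lemma shortExact_mk_ofHom (hf : Function.Injective f) (hg : Function.Surjective g)
    (hfg : Function.Exact f g) :
    (ShortComplex.mk (ModuleCat.ofHom f) (ModuleCat.ofHom g)
      (by ext x; exact hfg.apply_apply_eq_zero x)).ShortExact where
  exact := (ShortComplex.ShortExact.moduleCat_exact_iff_function_exact _).2 hfg
  mono_f := (ModuleCat.mono_iff_injective _).2 hf
  epi_g := (ModuleCat.epi_iff_surjective _).2 hg

variable (J i) in
/-- The connecting map of the long exact sequence of local cohomology. -/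
def δ (hf : Function.Injective f) (hg : Function.Surjective g) (hfg : Function.Exact f g) :
    LocalExt J i C →ₗ[R] LocalExt J (i + 1) A :=
  postcomp (shortExact_mk_ofHom hf hg hfg).extClass rfl

lemma exact_map_map (hf : Function.Injective f) (hg : Function.Surjective g)
    (hfg : Function.Exact f g) : Function.Exact (map J i f) (map J i g) :=
  postcomp_exact _ _ (add_zero 0) ((Ext.mk₀_comp_mk₀ _ _).trans
    ((congrArg Ext.mk₀ (ModuleCat.hom_ext hfg.linearMap_comp_eq_zero)).trans (Ext.mk₀_zero _ _)))
    fun _ e he ↦ Ext.covariant_sequence_exact₂ _ (shortExact_mk_ofHom hf hg hfg) e he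

lemma exact_map_δ (hf : Function.Injective f) (hg : Function.Surjective g)
    (hfg : Function.Exact f g) : Function.Exact (map J i g) (δ J i hf hg hfg) :=
  postcomp_exact _ _ (zero_add 1) (shortExact_mk_ofHom hf hg hfg).comp_extClass
    fun _ e he ↦ Ext.covariant_sequence_exact₃ _ (shortExact_mk_ofHom hf hg hfg) e rfl he

lemma exact_δ_map (hf : Function.Injective f) (hg : Function.Surjective g)
    (hfg : Function.Exact f g) : Function.Exact (δ J i hf hg hfg) (map J (i + 1) f) :=
  postcomp_exact _ _ (add_zero 1) (shortExact_mk_ofHom hf hg hfg).extClass_comp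
    fun _ e he ↦ Ext.covariant_sequence_exact₁ _ (shortExact_mk_ofHom hf hg hfg) e he rfl

lemma map_surjective_of_subsingleton (hf : Function.Injective f) (hg : Function.Surjective g)
    (hfg : Function.Exact f g) (hA : Subsingleton (LocalExt J (i + 1) A)) :
    Function.Surjective (map J i g) := fun w ↦
  (exact_map_δ hf hg hfg w).1 (hA.elim _ _)

lemma map_injective_of_subsingleton (hf : Function.Injective f) (hg : Function.Surjective g)
    (hfg : Function.Exact f g) (hC : Subsingleton (LocalExt J i C)) :
    Function.Injective (map J (i + 1) f) := by
  rw [injective_iff_map_eq_zero]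
  intro z hz
  obtain ⟨w, rfl⟩ := (exact_δ_map hf hg hfg z).1 hz
  rw [hC.elim w 0, map_zero]

lemma subsingleton_of_map_surjective (hf : Function.Injective f) (hg : Function.Surjective g)
    (hfg : Function.Exact f g) (hgs : Function.Surjective (map J i g))
    (hB : Subsingleton (LocalExt J (i + 1) B)) : Subsingleton (LocalExt J (i + 1) A) := by
  refine subsingleton_of_forall_eq 0 fun z ↦ ?_
  obtain ⟨w, rfl⟩ := (exact_δ_map hf hg hfg z).1 (Subsingleton.elim _ _)
  exact (exact_map_δ hf hg hfg w).2 (hgs w)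

end ShortExact

end LocalExt

end LocalExt

section PowTorsion

variable {R : Type*} [CommRing R] (J : Ideal R) (M : Type*) [AddCommGroup M] [Module R M]
  {N : Type*} [AddCommGroup N] [Module R N]

/-- A module is `J`-power torsion if each of its elements is killed by a power of `J`. -/
def IsPowTorsion : Prop :=
  ∀ x : M, ∃ t, ∀ r ∈ J ^ t, r • x = 0

/-- The `J`-power torsion submodule `Γ_J(M)`. -/
def powTorsion : Submodule R M where
  carrier := {x | ∃ t, ∀ r ∈ J ^ t, r • x = 0}
  zero_mem' := ⟨0, by simp⟩
  add_mem' := by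
    rintro a b ⟨s, hs⟩ ⟨t, ht⟩
    refine ⟨max s t, fun r hr ↦ ?_⟩
    rw [smul_add, hs r (Ideal.pow_le_pow_right (le_max_left _ _) hr),
      ht r (Ideal.pow_le_pow_right (le_max_right _ _) hr), add_zero]
  smul_mem' := by
    rintro c x ⟨t, ht⟩
    exact ⟨t, fun r hr ↦ by rw [smul_comm, ht r hr, smul_zero]⟩

variable {J M}

lemma isPowTorsion_powTorsion : IsPowTorsion J (powTorsion J M) := by
  rintro ⟨x, t, ht⟩
  exact ⟨t, fun r hr ↦ Subtype.ext (ht r hr)⟩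

lemma IsPowTorsion.of_pow_le_annihilator {c : ℕ} (h : J ^ c ≤ Module.annihilator R M) :
    IsPowTorsion J M :=
  fun x ↦ ⟨c, fun _ hr ↦ Module.mem_annihilator.1 (h hr) x⟩

lemma IsPowTorsion.of_surjective (h : IsPowTorsion J M) {f : M →ₗ[R] N}
    (hf : Function.Surjective f) : IsPowTorsion J N := by
  intro y
  obtain ⟨x, rfl⟩ := hf y
  obtain ⟨t, ht⟩ := h x
  exact ⟨t, fun r hr ↦ by rw [← map_smul, ht r hr, map_zero]⟩

lemma IsPowTorsion.exists_pow_smul_apply_eq_zero [Module.Finite R M] (h : IsPowTorsion J N)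
    (g : M →ₗ[R] N) : ∃ t, ∀ r ∈ J ^ t, ∀ x, r • g x = 0 := by
  obtain ⟨s, hs⟩ := Module.Finite.fg_top (R := R) (M := M)
  choose t ht using h
  refine ⟨s.sup fun x ↦ t (g x), fun r hr x ↦ ?_⟩
  have hle : (⊤ : Submodule R M) ≤ LinearMap.ker (r • g) := by
    rw [← hs, Submodule.span_le]
    exact fun y hy ↦
      ht _ r (Ideal.pow_le_pow_right (Finset.le_sup (f := fun x ↦ t (g x)) hy) hr)
  exact hle (Submodule.mem_top (x := x))

/-- Artin–Rees turns the torsion bound for `g` into vanishing on a power of `J`. -/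
lemma IsPowTorsion.exists_apply_eq_zero_of_mem_pow [IsNoetherianRing R] (h : IsPowTorsion J N)
    {A : Ideal R} (g : A →ₗ[R] N) : ∃ s, ∀ a : A, (a : R) ∈ J ^ s → g a = 0 := by
  obtain ⟨t, ht⟩ := h.exists_pow_smul_apply_eq_zero g
  obtain ⟨k, hk⟩ := Ideal.exists_pow_inf_eq_pow_smul J A
  refine ⟨k + t, fun a ha ↦ ?_⟩
  have hmem : (a : R) ∈ J ^ t • A := by
    have ha' : (a : R) ∈ (J ^ (k + t) • ⊤ ⊓ A : Submodule R R) := ⟨by simpa using ha, a.2⟩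
    rw [hk (k + t) (by lia), Nat.add_sub_cancel_left] at ha'
    exact Submodule.smul_mono le_rfl inf_le_right ha'
  have hmap : J ^ t • A ≤ (LinearMap.ker g).map A.subtype :=
    Submodule.smul_le.2 fun r hr b hb ↦
      ⟨r • ⟨b, hb⟩, (map_smul g r _).trans (ht r hr ⟨b, hb⟩), rfl⟩
  obtain ⟨b, hb, hba⟩ := hmap hmem
  rwa [← Subtype.ext hba]

end PowTorsion

section Injective

variable {R : Type u} [CommRing R] {J : Ideal R}

lemma exists_eq_smul_of_injective {E : Type u} [AddCommGroup E] [Module R E] [Module.Injective R E]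
    {A I : Ideal R} (g : A →ₗ[R] E) (hg : ∀ a : A, (a : R) ∈ I → g a = 0) :
    ∃ e : E, (∀ r ∈ I, r • e = 0) ∧ ∀ a : A, g a = (a : R) • e := by
  let q : A →ₗ[R] R ⧸ I := I.mkQ ∘ₗ A.subtype
  have hq : LinearMap.ker q ≤ LinearMap.ker g := fun a ha ↦
    hg a ((Submodule.Quotient.mk_eq_zero I).1 ha)
  let qbar : (A ⧸ LinearMap.ker q) →ₗ[R] R ⧸ I := (LinearMap.ker q).liftQ q le_rfl
  have hqbar : Function.Injective qbar :=
    LinearMap.ker_eq_bot.1 (Submodule.ker_liftQ_eq_bot _ _ _ le_rfl)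
  obtain ⟨u, hu⟩ := Module.Injective.extension_property R E _ _ qbar hqbar
    ((LinearMap.ker q).liftQ g hq)
  have hu_mk (r : R) : r • u (Submodule.Quotient.mk 1) = u (Submodule.Quotient.mk r) := by
    rw [← map_smul, ← Submodule.Quotient.mk_smul, smul_eq_mul, mul_one]
  refine ⟨u (Submodule.Quotient.mk 1), fun r hr ↦ ?_, fun a ↦ ?_⟩
  · rw [hu_mk, (Submodule.Quotient.mk_eq_zero _).2 hr, map_zero]
  · rw [hu_mk]
    exact congr($hu (Submodule.Quotient.mk a)).symm

lemma injective_powTorsion [IsNoetherianRing R] (E : Type u) [AddCommGroup E] [Module R E]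
    [Module.Injective R E] : Module.Injective R (powTorsion J E) := by
  refine Module.Baer.injective fun A g ↦ ?_
  obtain ⟨s, hs⟩ := isPowTorsion_powTorsion.exists_apply_eq_zero_of_mem_pow g
  obtain ⟨e, he, hge⟩ := exists_eq_smul_of_injective ((powTorsion J E).subtype ∘ₗ g)
    (I := J ^ s) (fun a ha ↦ by simp [hs a ha])
  exact ⟨LinearMap.toSpanSingleton R _ ⟨e, s, he⟩, fun a ha ↦ Subtype.ext (hge ⟨a, ha⟩).symm⟩

lemma exists_injective_isPowTorsion [IsNoetherianRing R] {T : Type u} [AddCommGroup T] [Module R T]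
    (hT : IsPowTorsion J T) :
    ∃ (E : Type u) (_ : AddCommGroup E) (_ : Module R E) (f : T →ₗ[R] E),
      Function.Injective f ∧ IsPowTorsion J E ∧ Module.Injective R E := by
  let E := Injective.under (ModuleCat.of R T)
  let ι : T →ₗ[R] E := (Injective.ι (ModuleCat.of R T)).hom
  have hι : Function.Injective ι := (ModuleCat.mono_iff_injective _).1 (Injective.ι_mono _)
  have : Injective (ModuleCat.of R E) := inferInstanceAs (Injective E)
  have : Module.Injective R E := Module.injective_module_of_injective_object R E
  refine ⟨powTorsion J E, inferInstance, inferInstance, ι.codRestrict _ fun x ↦ ?_,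
    fun x y h ↦ hι (congrArg Subtype.val h), isPowTorsion_powTorsion, injective_powTorsion E⟩
  obtain ⟨t, ht⟩ := hT x
  exact ⟨t, fun r hr ↦ by rw [← map_smul, ht r hr, map_zero]⟩

namespace LocalExt

variable {M N : Type u} [AddCommGroup M] [Module R M] [AddCommGroup N] [Module R N] {i : ℕ}

lemma map_zero_surjective {g : M →ₗ[R] N} (hg : Function.Surjective g) (hM : IsPowTorsion J M) :
    Function.Surjective (map J 0 g) := by
  intro z
  obtain ⟨t, e, rfl⟩ := exists_of z
  obtain ⟨u, rfl⟩ : ∃ u, Ext.mk₀ u = e := ⟨_, Ext.mk₀_linearEquiv₀_apply (R := R) e⟩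
  obtain ⟨x, hx⟩ := hg (u (Submodule.Quotient.mk 1))
  obtain ⟨s, hs⟩ := hM x
  have hle : J ^ (max s t) ≤ LinearMap.ker (LinearMap.toSpanSingleton R M x) := fun r hr ↦
    hs r (Ideal.pow_le_pow_right (le_max_left _ _) hr)
  let v : quotPow J (max s t) ⟶ ModuleCat.of R M := ModuleCat.ofHom (Submodule.liftQ _ _ hle)
  have huv : v ≫ ModuleCat.ofHom g = quotPowMap J (le_max_right s t) ≫ u := by
    ext
    change g ((1 : R) • x) = u (Submodule.Quotient.mk 1)
    rw [one_smul, hx]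
  refine ⟨of J 0 M (max s t) (Ext.mk₀ v), ?_⟩
  rw [map_of, ← of_extQuotPowMap J 0 N (le_max_right s t), extQuotPowMap_apply, Ext.mk₀_comp_mk₀,
    Ext.mk₀_comp_mk₀, huv]

lemma subsingleton_of_isPowTorsion [IsNoetherianRing R] (i : ℕ) {T : Type u} [AddCommGroup T]
    [Module R T] (hT : IsPowTorsion J T) : Subsingleton (LocalExt J (i + 1) T) := by
  induction i generalizing T with
  | zero =>
    obtain ⟨E, _, _, f, hf, hE, _⟩ := exists_injective_isPowTorsion hT
    exact subsingleton_of_map_surjective hf (Submodule.mkQ_surjective _)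
      (LinearMap.exact_map_mkQ_range f) (map_zero_surjective (Submodule.mkQ_surjective _) hE)
      subsingleton_of_injective
  | succ i ih =>
    obtain ⟨E, _, _, f, hf, hE, _⟩ := exists_injective_isPowTorsion hT
    have := ih (hE.of_surjective (LinearMap.range f).mkQ_surjective)
    exact subsingleton_of_map_surjective hf (Submodule.mkQ_surjective _)
      (LinearMap.exact_map_mkQ_range f) (Function.surjective_to_subsingleton _)
      subsingleton_of_injective

section TorsionKernel

variable {A B C : Type u} [AddCommGroup A] [Module R A] [AddCommGroup B] [Module R B]
  [AddCommGroup C] [Module R C] {f : A →ₗ[R] B} {g : B →ₗ[R] C}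

lemma exact_subtype_range (hfg : Function.Exact f g) :
    Function.Exact (LinearMap.range f).subtype g := by
  rw [LinearMap.exact_iff, Submodule.range_subtype, hfg.linearMap_ker_eq]

lemma map_eq_map_subtype_comp (z : LocalExt J i A) :
    map J i f z = map J i (LinearMap.range f).subtype (map J i f.rangeRestrict z) := by
  rw [← map_comp_apply]
  rfl

variable [IsNoetherianRing R]

lemma map_rangeRestrict_bijective (hf : IsPowTorsion J (LinearMap.ker f)) :
    Function.Bijective (map J (i + 1) f.rangeRestrict) := by
  have hex : Function.Exact (LinearMap.ker f).subtype f.rangeRestrict := by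
    rw [LinearMap.exact_iff, LinearMap.ker_rangeRestrict, Submodule.range_subtype]
  have hinj := Submodule.subtype_injective (LinearMap.ker f)
  have hsurj := LinearMap.surjective_rangeRestrict f
  refine ⟨?_, map_surjective_of_subsingleton hinj hsurj hex
    (subsingleton_of_isPowTorsion (i + 1) hf)⟩
  rw [injective_iff_map_eq_zero]
  intro z hz
  obtain ⟨w, rfl⟩ := (exact_map_map hinj hsurj hex z).1 hz
  have := subsingleton_of_isPowTorsion i hf
  rw [Subsingleton.elim w 0, map_zero]

lemma map_surjective_of_isPowTorsion_ker (hf : IsPowTorsion J (LinearMap.ker f))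
    (hg : Function.Surjective g) (hfg : Function.Exact f g)
    (hA : Subsingleton (LocalExt J (i + 1) A)) : Function.Surjective (map J i g) :=
  map_surjective_of_subsingleton (Submodule.subtype_injective _) hg (exact_subtype_range hfg)
    ((Equiv.ofBijective _ (map_rangeRestrict_bijective hf)).subsingleton_congr.1 hA)

lemma exact_map_map_of_isPowTorsion_ker (hf : IsPowTorsion J (LinearMap.ker f))
    (hg : Function.Surjective g) (hfg : Function.Exact f g) :
    Function.Exact (map J (i + 1) f) (map J (i + 1) g) := by
  intro z
  rw [exact_map_map (Submodule.subtype_injective _) hg (exact_subtype_range hfg) z]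
  simp only [Set.mem_range, map_eq_map_subtype_comp (f := f)]
  exact (map_rangeRestrict_bijective hf).2.exists

lemma map_injective_of_isPowTorsion_ker (hf : IsPowTorsion J (LinearMap.ker f))
    (hg : Function.Surjective g) (hfg : Function.Exact f g)
    (hC : Subsingleton (LocalExt J i C)) : Function.Injective (map J (i + 1) f) := by
  rw [show ⇑(map J (i + 1) f) = _ from funext map_eq_map_subtype_comp]
  exact (map_injective_of_subsingleton (Submodule.subtype_injective _) hg
    (exact_subtype_range hfg) hC).comp (map_rangeRestrict_bijective hf).1

end TorsionKernel

end LocalExt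

end Injective

section Depth

open scoped Pointwise

namespace LocalExt

variable {R : Type u} [CommRing R] {J : Ideal R} {i : ℕ} {M : Type u} [AddCommGroup M] [Module R M]

lemma subsingleton_of_isSMulRegular {x : R} (hx : x ∈ J) (h : IsSMulRegular (LocalExt J i M) x) :
    Subsingleton (LocalExt J i M) := by
  refine subsingleton_of_forall_eq 0 fun z ↦ ?_
  obtain ⟨t, ht⟩ := exists_pow_smul_eq_zero z
  exact (h.pow t).right_eq_zero_of_smul (ht _ (Ideal.pow_mem_pow hx t))

lemma subsingleton_of_isWeaklyRegular {rs : List R} (hrs : ∀ r ∈ rs, r ∈ J)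
    (hreg : RingTheory.Sequence.IsWeaklyRegular M rs) (hi : i < rs.length) :
    Subsingleton (LocalExt J i M) := by
  induction rs generalizing M i with
  | nil => simp at hi
  | cons r rs ih =>
    obtain ⟨hr, hreg⟩ := (RingTheory.Sequence.isWeaklyRegular_cons_iff M r rs).1 hreg
    have hinj : Function.Injective (r • (LinearMap.id : M →ₗ[R] M)) := hr
    have hex : Function.Exact (r • (LinearMap.id : M →ₗ[R] M))
        (Submodule.mkQ (r • (⊤ : Submodule R M))) := fun y ↦ by
      simp [Submodule.mem_smul_pointwise_iff_exists]
    suffices Function.Injective (map J i (r • (LinearMap.id : M →ₗ[R] M))) by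
      refine subsingleton_of_isSMulRegular (hrs r List.mem_cons_self) fun a b hab ↦ this ?_
      simpa only [map_smul_id_apply] using hab
    cases i with
    | zero => exact map_zero_injective hinj
    | succ i =>
      exact map_injective_of_subsingleton hinj (Submodule.mkQ_surjective _) hex
        (ih (M := QuotSMulTop r M) (fun s hs ↦ hrs s (List.mem_cons_of_mem r hs)) hreg
          (Nat.lt_of_succ_lt_succ hi))

end LocalExt

end Depth

section Variables

open MvPolynomial

variable {σ A : Type*} [CommRing A]

lemma mem_span_X_image_of_X_mul_mem {s : Set σ} {j : σ} (hj : j ∉ s) {p : MvPolynomial σ A}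
    (hp : X j * p ∈ Ideal.span (X '' s)) : p ∈ Ideal.span (X '' s) := by
  rw [mem_ideal_span_X_image] at hp ⊢
  intro m hm
  obtain ⟨a, ha, hma⟩ := hp (Finsupp.single j 1 + m) (by
    rwa [mem_support_iff, coeff_X_mul, ← mem_support_iff])
  exact ⟨a, ha, by simpa [show j ≠ a by rintro rfl; exact hj ha] using hma⟩

lemma isWeaklyRegular_ofFn_X (m : ℕ) : RingTheory.Sequence.IsWeaklyRegular
    (MvPolynomial (Fin m) A) (List.ofFn (X : Fin m → MvPolynomial (Fin m) A)) := by
  refine ⟨fun i hi ↦ ?_⟩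
  have hspan : (Ideal.ofList ((List.ofFn (X : Fin m → MvPolynomial (Fin m) A)).take i) • ⊤ :
      Ideal (MvPolynomial (Fin m) A)) = Ideal.span (X '' {j | j.1 < i}) := by
    rw [smul_eq_mul, Ideal.mul_top, Ideal.ofList]
    congr 1
    ext x
    simp only [List.mem_take_iff_getElem, List.length_ofFn, List.getElem_ofFn, Set.mem_image]
    constructor
    · rintro ⟨j, hj, rfl⟩
      exact ⟨⟨j, by lia⟩, show j < i by lia, rfl⟩
    · rintro ⟨j, hj, rfl⟩
      exact ⟨j, lt_min hj j.2, rfl⟩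
  rw [isSMulRegular_quotient_iff_mem_of_smul_mem, hspan, List.getElem_ofFn]
  exact fun p ↦ mem_span_X_image_of_X_mul_mem (show ⟨i, _⟩ ∉ {j : Fin m | j.1 < i} from lt_irrefl i)

lemma subsingleton_localExt_idealOfVars {A : Type u} [CommRing A] {m i : ℕ} (hi : i < m) :
    Subsingleton (LocalExt (idealOfVars (Fin m) A) i (MvPolynomial (Fin m) A)) := by
  refine LocalExt.subsingleton_of_isWeaklyRegular (fun r hr ↦ ?_) (isWeaklyRegular_ofFn_X m)
    (by simpa using hi)
  obtain ⟨j, rfl⟩ := List.mem_ofFn.1 hr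
  exact Ideal.subset_span ⟨j, rfl⟩

end Variables

section TensorFree

namespace LocalExt

variable {R : Type u} [CommRing R] {J : Ideal R} {i : ℕ} {L L' Q : Type u}
  [AddCommGroup L] [Module R L] [AddCommGroup L'] [Module R L'] [AddCommGroup Q] [Module R Q]

variable (J i L Q) in
/-- The comparison map `L ⊗ H^i_J(Q) → H^i_J(L ⊗ Q)`. -/
def tensorMap : L ⊗[R] LocalExt J i Q →ₗ[R] LocalExt J i (L ⊗[R] Q) :=
  TensorProduct.lift (map J i ∘ₗ TensorProduct.mk R L Q)

lemma tensorMap_tmul (x : L) (z : LocalExt J i Q) :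
    tensorMap J i L Q (x ⊗ₜ z) = map J i (TensorProduct.mk R L Q x) z := rfl

lemma map_rTensor_tensorMap (f : L →ₗ[R] L') (y : L ⊗[R] LocalExt J i Q) :
    map J i (f.rTensor Q) (tensorMap J i L Q y) = tensorMap J i L' Q (f.rTensor _ y) := by
  induction y with
  | zero => simp only [map_zero]
  | add a b ha hb => simp only [map_add, ha, hb]
  | tmul x z =>
    rw [LinearMap.rTensor_tmul, tensorMap_tmul, tensorMap_tmul, ← map_comp_apply]
    rfl

variable {ι : Type*} [DecidableEq ι] (b : Module.Basis ι R L)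

lemma map_lapply_tensorMap (y : L ⊗[R] LocalExt J i Q) (a : ι) :
    map J i (Finsupp.lapply a ∘ₗ (TensorProduct.equivFinsuppOfBasisLeft b).toLinearMap)
      (tensorMap J i L Q y) = TensorProduct.equivFinsuppOfBasisLeft b y a := by
  induction y with
  | zero => simp only [map_zero, Finsupp.zero_apply]
  | add x y hx hy => simp only [map_add, hx, hy, Finsupp.add_apply]
  | tmul x z =>
    rw [tensorMap_tmul, ← map_comp_apply,
      TensorProduct.equivFinsuppOfBasisLeft_apply_tmul_apply, ← map_smul_id_apply]
    congr 2
    ext q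
    simp

lemma tensorMap_injective [Module.Free R L] : Function.Injective (tensorMap J i L Q) := by
  classical
  rw [injective_iff_map_eq_zero]
  intro y hy
  let b := Module.Free.chooseBasis R L
  refine (TensorProduct.equivFinsuppOfBasisLeft b).injective (Finsupp.ext fun a ↦ ?_)
  rw [← map_lapply_tensorMap, hy, map_zero, map_zero, Finsupp.zero_apply]

variable [Module.Free R L] [Module.Finite R L]

lemma tensorMap_surjective : Function.Surjective (tensorMap J i L Q) := by
  classical
  intro z
  let b := Module.Free.chooseBasis R L
  let coord (a) : L ⊗[R] Q →ₗ[R] Q :=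
    Finsupp.lapply a ∘ₗ (TensorProduct.equivFinsuppOfBasisLeft b).toLinearMap
  have hid : (LinearMap.id : L ⊗[R] Q →ₗ[R] L ⊗[R] Q) =
      ∑ a, TensorProduct.mk R L Q (b a) ∘ₗ coord a := by
    ext x q
    refine (TensorProduct.equivFinsuppOfBasisLeft b).symm_apply_apply (x ⊗ₜ q) |>.symm.trans ?_
    rw [TensorProduct.equivFinsuppOfBasisLeft_symm_apply, Finsupp.sum_fintype _ _ (by simp)]
    simp [coord]
  refine ⟨∑ a, b a ⊗ₜ map J i (coord a) z, ?_⟩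
  simp only [map_sum, tensorMap_tmul, ← map_comp_apply]
  rw [← LinearMap.sum_apply, ← map_sum, ← hid, map_id_apply]

variable (J i L Q) in
/-- Local cohomology commutes with tensoring by a finite free module. -/
def tensorEquiv : L ⊗[R] LocalExt J i Q ≃ₗ[R] LocalExt J i (L ⊗[R] Q) :=
  LinearEquiv.ofBijective (tensorMap J i L Q) ⟨tensorMap_injective, tensorMap_surjective⟩

variable (L) in
lemma subsingleton_tensor (_ : Subsingleton (LocalExt J i Q)) :
    Subsingleton (LocalExt J i (L ⊗[R] Q)) :=
  (tensorEquiv J i L Q).toEquiv.subsingleton_congr.1 inferInstance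

variable (L) in
lemma subsingleton_of_free (h : Subsingleton (LocalExt J i R)) :
    Subsingleton (LocalExt J i L) := by
  have := subsingleton_tensor L h
  have hinj : Function.LeftInverse (map J i (TensorProduct.rid R L).toLinearMap)
      (map J i (TensorProduct.rid R L).symm.toLinearMap) := fun z ↦ by
    rw [← map_comp_apply, LinearEquiv.comp_coe, LinearEquiv.symm_trans_self]
    exact map_id_apply z
  exact hinj.injective.subsingleton

end LocalExt

end TensorFree

section Splitting

variable {R : Type*} [CommRing R] {F Q : Type*} [AddCommGroup F] [Module R F]
  [AddCommGroup Q] [Module R Q] {π : F →ₗ[R] Q} {s : R}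

variable (π) in
/-- The ideal of those `s` for which `π` splits up to `s`, i.e. for which multiplication by `s` on
`Q` lifts along `π : F → Q`. -/
def splittingIdeal : Ideal R where
  carrier := {s | ∃ α : Q →ₗ[R] F, π ∘ₗ α = s • LinearMap.id}
  zero_mem' := ⟨0, by simp⟩
  add_mem' := by
    rintro a b ⟨α, hα⟩ ⟨β, hβ⟩
    exact ⟨α + β, by rw [LinearMap.comp_add, hα, hβ, add_smul]⟩
  smul_mem' := by
    rintro c a ⟨α, hα⟩
    exact ⟨c • α, by rw [LinearMap.comp_smul, hα, smul_eq_mul, mul_smul]⟩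

lemma splittingIdeal_not_le [Module.FinitePresentation R Q] (hπ : Function.Surjective π)
    (p : Ideal R) [p.IsPrime]
    [Module.Projective (Localization.AtPrime p) (LocalizedModule p.primeCompl Q)] :
    ¬ splittingIdeal π ≤ p := by
  intro hle
  let S := p.primeCompl
  let f := LocalizedModule.mkLinearMap S F
  let q := LocalizedModule.mkLinearMap S Q
  obtain ⟨σ, hσ⟩ := Module.projective_lifting_property (LocalizedModule.map S π) LinearMap.id
    (LocalizedModule.map_surjective S π hπ)
  obtain ⟨α, s, hα⟩ := Module.FinitePresentation.exists_lift_of_isLocalizedModule S f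
    (σ.restrictScalars R ∘ₗ q)
  have hq : q ∘ₗ (π ∘ₗ α) = q ∘ₗ ((s : R) • LinearMap.id) := by
    ext x
    calc q (π (α x)) = LocalizedModule.map S π (f (α x)) := by simp [f, q]
      _ = LocalizedModule.map S π ((s : R) • σ (q x)) := congrArg _ congr($hα x)
      _ = (s : R) • q x := by rw [LinearMap.map_smul_of_tower]; exact congr((s : R) • $hσ (q x))
      _ = q ((s : R) • x) := (map_smul q _ x).symm
  obtain ⟨t, ht⟩ := Module.Finite.exists_smul_of_comp_eq_of_isLocalizedModule S q _ _ hq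
  refine S.mul_mem t.2 s.2 (hle ⟨(t : R) • α, ?_⟩)
  rw [LinearMap.comp_smul, mul_smul]
  exact ht

lemma exists_pow_le_splittingIdeal [Module.FinitePresentation R Q] (hπ : Function.Surjective π)
    {J : Ideal R} (hJ : J.FG) (hQ : ∀ (p : Ideal R) [p.IsPrime], ¬ J ≤ p →
      Module.Projective (Localization.AtPrime p) (LocalizedModule p.primeCompl Q)) :
    ∃ t, J ^ t ≤ splittingIdeal π := by
  refine Ideal.exists_pow_le_of_le_radical_of_fg ?_ hJ
  rw [Ideal.radical_eq_sInf]
  refine le_sInf fun p ⟨hle, _⟩ ↦ ?_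
  by_contra hJp
  have := hQ p hJp
  exact splittingIdeal_not_le hπ p hle

lemma smul_eq_zero_of_rTensor_eq_zero [Module.Flat R F] (hs : s ∈ splittingIdeal π)
    {P L : Type*} [AddCommGroup P] [Module R P] [AddCommGroup L] [Module R L] {f : P →ₗ[R] L}
    (hf : Function.Injective f) {y : P ⊗[R] Q} (hy : f.rTensor Q y = 0) : s • y = 0 := by
  obtain ⟨α, hα⟩ := hs
  have hzero : α.lTensor P y = 0 := by
    apply Module.Flat.rTensor_preserves_injective_linearMap (M := F) f hf
    rw [map_zero, ← LinearMap.comp_apply, LinearMap.rTensor_comp_lTensor,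
      ← LinearMap.lTensor_comp_rTensor, LinearMap.comp_apply, hy, map_zero]
  calc s • y = (π ∘ₗ α).lTensor P y := by simp [hα]
    _ = 0 := by rw [LinearMap.lTensor_comp_apply, hzero, map_zero]

lemma isPowTorsion_ker_rTensor [Module.Flat R F] {J : Ideal R} {t : ℕ}
    (ht : J ^ t ≤ splittingIdeal π) {P L : Type*} [AddCommGroup P] [Module R P] [AddCommGroup L]
    [Module R L] {f : P →ₗ[R] L} (hf : Function.Injective f) :
    IsPowTorsion J (LinearMap.ker (f.rTensor Q)) :=
  fun y ↦ ⟨t, fun _ hr ↦ Subtype.ext (smul_eq_zero_of_rTensor_eq_zero (ht hr) hf y.2)⟩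

lemma LocalExt.splittingIdeal_le_annihilator {R F Q : Type u} [CommRing R] [AddCommGroup F]
    [Module R F] [AddCommGroup Q] [Module R Q] {π : F →ₗ[R] Q} {J : Ideal R} {i : ℕ}
    (hF : Subsingleton (LocalExt J i F)) :
    splittingIdeal π ≤ Module.annihilator R (LocalExt J i Q) := by
  rintro s ⟨α, hα⟩
  refine Module.mem_annihilator.2 fun z ↦ ?_
  rw [← map_smul_id_apply, ← hα, map_comp_apply, Subsingleton.elim (map J i α z) 0, map_zero]

end Splitting

section Syzygies

namespace LocalExt

variable {R : Type u} [CommRing R] [IsNoetherianRing R] {J : Ideal R} {Q : Type u}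
  [AddCommGroup Q] [Module R Q] {L S : ℕ → Type u} [∀ j, AddCommGroup (L j)]
  [∀ j, Module R (L j)] [∀ j, AddCommGroup (S j)] [∀ j, Module R (S j)]
  {ι : ∀ j, S (j + 1) →ₗ[R] L j} {π : ∀ j, L j →ₗ[R] S j}

lemma exact_map_comp_syzygy (hπ : ∀ j, Function.Surjective (π j))
    (hex : ∀ j, Function.Exact (ι j) (π j))
    (hι : ∀ j, IsPowTorsion J (LinearMap.ker ((ι j).rTensor Q))) (i j : ℕ)
    (h : Subsingleton (LocalExt J (i + 2) (S (j + 2) ⊗[R] Q))) :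
    Function.Exact (map J (i + 1) ((ι j ∘ₗ π (j + 1)).rTensor Q))
      (map J (i + 1) ((π j).rTensor Q)) := by
  have hsurj := map_surjective_of_isPowTorsion_ker (hι (j + 1))
    (LinearMap.rTensor_surjective Q (hπ (j + 1))) (rTensor_exact Q (hex (j + 1)) (hπ (j + 1))) h
  have hexact := exact_map_map_of_isPowTorsion_ker (i := i) (hι j)
    (LinearMap.rTensor_surjective Q (hπ j)) (rTensor_exact Q (hex j) (hπ j))
  intro z
  rw [hexact z]
  simp only [Set.mem_range, LinearMap.rTensor_comp, map_comp_apply]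
  exact hsurj.exists

variable [∀ j, Module.Free R (L j)] [∀ j, Module.Finite R (L j)]

lemma subsingleton_syzygy_tensor (hπ : ∀ j, Function.Surjective (π j))
    (hex : ∀ j, Function.Exact (ι j) (π j))
    (hι : ∀ j, IsPowTorsion J (LinearMap.ker ((ι j).rTensor Q)))
    (h₀ : IsPowTorsion J (S 0 ⊗[R] Q)) (c j : ℕ)
    (hvan : ∀ m < j, Subsingleton (LocalExt J (c + 1 + m + 1) Q)) :
    Subsingleton (LocalExt J (c + 1 + j) (S j ⊗[R] Q)) := by
  induction j with
  | zero => exact subsingleton_of_isPowTorsion c h₀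
  | succ j ih =>
    have := subsingleton_tensor (L j) (hvan j j.lt_succ_self)
    exact (map_injective_of_isPowTorsion_ker (hι j) (LinearMap.rTensor_surjective Q (hπ j))
      (rTensor_exact Q (hex j) (hπ j)) (ih fun m hm ↦ hvan m (by lia))).subsingleton

lemma rTensor_surjective_of_subsingleton (hπ : ∀ j, Function.Surjective (π j))
    (hex : ∀ j, Function.Exact (ι j) (π j))
    (hι : ∀ j, IsPowTorsion J (LinearMap.ker ((ι j).rTensor Q)))
    (h₀ : IsPowTorsion J (S 0 ⊗[R] Q)) (i : ℕ)
    (h : Subsingleton (LocalExt J (i + 2) (S 2 ⊗[R] Q))) :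
    Function.Surjective ((ι 0 ∘ₗ π 1).rTensor (LocalExt J (i + 1) Q)) := by
  have := subsingleton_of_isPowTorsion i h₀
  intro y
  obtain ⟨z, hz⟩ := (exact_map_comp_syzygy hπ hex hι i 0 h (tensorMap J (i + 1) (L 0) Q y)).1
    (Subsingleton.elim _ _)
  obtain ⟨x, rfl⟩ := tensorMap_surjective z
  rw [map_rTensor_tensorMap] at hz
  exact ⟨x, tensorMap_injective hz⟩

lemma rTensor_exact_of_subsingleton (hπ : ∀ j, Function.Surjective (π j))
    (hex : ∀ j, Function.Exact (ι j) (π j))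
    (hι : ∀ j, IsPowTorsion J (LinearMap.ker ((ι j).rTensor Q)))
    (h₀ : IsPowTorsion J (S 0 ⊗[R] Q)) (c j : ℕ)
    (hvan : ∀ m < j, Subsingleton (LocalExt J (c + 1 + m + 1) Q))
    (h : Subsingleton (LocalExt J (c + 1 + j + 2) (S (j + 3) ⊗[R] Q))) :
    Function.Exact ((ι (j + 1) ∘ₗ π (j + 2)).rTensor (LocalExt J (c + 1 + j + 1) Q))
      ((ι j ∘ₗ π (j + 1)).rTensor (LocalExt J (c + 1 + j + 1) Q)) := by
  have hinj := map_injective_of_isPowTorsion_ker (hι j) (LinearMap.rTensor_surjective Q (hπ j))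
    (rTensor_exact Q (hex j) (hπ j)) (subsingleton_syzygy_tensor hπ hex hι h₀ c j hvan)
  have hexact := (exact_map_comp_syzygy hπ hex hι _ (j + 1) h).comp_injective _ hinj (map_zero _)
  have hcomp : map J (c + 1 + j + 1) ((ι j).rTensor Q) ∘
      map J (c + 1 + j + 1) ((π (j + 1)).rTensor Q) =
      map J (c + 1 + j + 1) ((ι j ∘ₗ π (j + 1)).rTensor Q) := by
    ext z
    rw [LinearMap.rTensor_comp, map_comp_apply, Function.comp_apply]
  rw [hcomp] at hexact
  exact (Function.Exact.iff_of_ladder_linearEquiv (e₁ := tensorEquiv J _ _ Q)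
    (e₂ := tensorEquiv J _ _ Q) (e₃ := tensorEquiv J _ _ Q)
    (LinearMap.ext (map_rTensor_tensorMap _)) (LinearMap.ext (map_rTensor_tensorMap _))).1 hexact

end LocalExt

end Syzygies

section TensorComplex

open MonoidalCategory

lemma isZero_of_isNilpotent_of_mono {C : Type*} [Category* C] [Preadditive C] {X : C} {f : End X}
    (hf : IsNilpotent f) (hm : Mono (show X ⟶ X from f)) : IsZero X := by
  obtain ⟨c, hc⟩ := hf
  rw [IsZero.iff_id_eq_zero]
  induction c with
  | zero => exact hc
  | succ c ih =>
    refine ih ((cancel_mono (show X ⟶ X from f)).1 ?_)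
    rw [zero_comp]
    exact (pow_succ' f c).symm.trans hc

/-- `Functor.mapEnd` of an additive functor, as a ring homomorphism. -/
def mapEndRingHom {C D : Type*} [Category* C] [Preadditive C] [Category* D] [Preadditive D]
    (F : C ⥤ D) [F.Additive] (X : C) : End X →+* End (F.obj X) where
  __ := F.mapEnd X
  map_zero' := F.map_zero X X
  map_add' _ _ := F.map_add

variable {R : Type u} [CommRing R] {N : ModuleCat.{u} R}

/-- The functor `X ↦ P ⊗ X` to complexes, for `P` a projective resolution of `N`; the homology of
`P ⊗ X` is `Tor N X`. -/
@[simps]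
def tensorComplex (P : ProjectiveResolution N) :
    ModuleCat.{u} R ⥤ ChainComplex (ModuleCat.{u} R) ℕ where
  obj X := (((tensoringRight _).obj X).mapHomologicalComplex _).obj P.complex
  map f := (NatTrans.mapHomologicalComplex ((tensoringRight _).map f) _).app P.complex

namespace tensorComplex

variable (P : ProjectiveResolution N)

instance : (tensorComplex P).Additive where
  map_add {X Y f g} := by
    ext i : 1
    exact MonoidalPreadditive.whiskerLeft_add f g

lemma shortExact_map {S : ShortComplex (ModuleCat.{u} R)} (hS : S.ShortExact) :
    (S.map (tensorComplex P)).ShortExact := by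
  refine HomologicalComplex.shortExact_of_degreewise_shortExact _ fun i ↦ ?_
  have : Module.Projective R (P.complex.X i) :=
    (IsProjective.iff_projective (P.complex.X i)).2 (P.projective i)
  exact hS.map_of_exact (tensorLeft (P.complex.X i))

/-- The homology of `P ⊗ X`, that is `Tor N X`, as a functor of `X`. -/
abbrev homology (n : ℕ) : ModuleCat.{u} R ⥤ ModuleCat.{u} R :=
  tensorComplex P ⋙ HomologicalComplex.homologyFunctor _ _ n

lemma mono_homology_map {S : ShortComplex (ModuleCat.{u} R)} (hS : S.ShortExact) (n : ℕ)
    (h : IsZero ((homology P (n + 1)).obj S.X₃)) : Mono ((homology P n).map S.f) :=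
  ((shortExact_map P hS).homology_exact₁ (n + 1) n (by simp)).mono_g (h.eq_of_src _ _)

lemma homology_map_smul_id_eq_zero {r : R} (hr : r ∈ Module.annihilator R N) (n : ℕ)
    (X : ModuleCat.{u} R) : (homology P n).map (r • 𝟙 X) = 0 := by
  have hπ : (r • 𝟙 P.complex) ≫ P.π = 0 := by
    rw [Linear.smul_comp, Category.id_comp]
    refine HomologicalComplex.to_single_hom_ext ?_
    ext x
    exact Module.mem_annihilator.1 hr (show N from (P.π.f 0).hom x)
  have hmap : (tensorComplex P).map (r • 𝟙 X) =
      (((tensoringRight _).obj X).mapHomologicalComplex _).map (r • 𝟙 P.complex) := by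
    ext i : 1
    exact (MonoidalLinear.whiskerLeft_smul _ r (𝟙 X)).trans
      ((congrArg (r • ·) ((whiskerLeft_id _ _).trans (id_whiskerRight _ _).symm)).trans
        (MonoidalLinear.smul_whiskerRight r _ X).symm)
  rw [Functor.comp_map, hmap]
  have := (((tensoringRight _).obj X).mapHomotopy
    (ProjectiveResolution.liftHomotopyZero _ hπ)).homologyMap_eq n
  exact this.trans (by rw [Functor.map_zero]; exact HomologicalComplex.homologyMap_zero _ _ _)

/-- `H₀(P ⊗ X) ≅ N ⊗ X`. -/
def homologyZeroIso (X : ModuleCat.{u} R) : (homology P 0).obj X ≅ N ⊗ X :=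
  (P.isoLeftDerivedObj ((tensoringRight _).obj X) 0).symm ≪≫
    ((tensoringRight _).obj X).leftDerivedZeroIsoSelf.app N

lemma isZero_homology_of_isZero_homology_succ {D M : Type u} [AddCommGroup D] [Module R D]
    [AddCommGroup M] [Module R M] {φ a : Module.End R D} {x : R} {p : D →ₗ[R] M}
    (hφ : Function.Injective φ) (hp : Function.Surjective p) (hex : Function.Exact φ p)
    (ha : IsNilpotent a) {c : ℕ} (hx : x ^ c ∈ Module.annihilator R N) (hxa : φ = x • 1 - a)
    {n : ℕ} (h : IsZero ((homology P (n + 1)).obj (.of R M))) :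
    IsZero ((homology P n).obj (.of R D)) := by
  let H := homology P n
  let T : Module.End R D →+* End (H.obj (.of R D)) :=
    (mapEndRingHom H (.of R D)).comp (ModuleCat.endRingEquiv (.of R D)).symm
  have hTx : IsNilpotent (T (x • 1)) := by
    refine ⟨c, ?_⟩
    rw [← map_pow, smul_pow, one_pow]
    exact homology_map_smul_id_eq_zero P hx n (.of R D)
  have hcomm : Commute (T (x • 1)) (T a) := ((Commute.one_left a).smul_left x).map T
  have hS := ModuleCat.shortComplex_shortExact
    (.mk (ModuleCat.ofHom φ) (ModuleCat.ofHom p) (by ext; exact hex.apply_apply_eq_zero _))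
    hex hφ hp
  refine isZero_of_isNilpotent_of_mono (f := T φ) ?_ (mono_homology_map P hS n h)
  rw [hxa, map_sub]
  exact hcomm.isNilpotent_sub hTx (ha.map T)

end tensorComplex

end TensorComplex

section PolynomialModule

open Polynomial

variable {R M : Type u} [CommRing R] [AddCommGroup M] [Module R M]

lemma coeff_X_sub_C_smul (s : R) (x : PolynomialModule R M) (i : ℕ) :
    ((X - C s) • x).coeff (i + 1) = x.coeff i - s • x.coeff (i + 1) := by
  rw [sub_eq_add_neg, ← C_neg, add_smul, ← monomial_one_one_eq_X, ← monomial_zero_left,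
    PolynomialModule.coeff_add, Finsupp.add_apply, PolynomialModule.monomial_smul_apply,
    PolynomialModule.monomial_smul_apply]
  simp [sub_eq_add_neg]

lemma X_sub_C_smul_injective (s : R) :
    Function.Injective fun x : PolynomialModule R M ↦ (X - C s) • x := by
  suffices ∀ x : PolynomialModule R M, (X - C s) • x = 0 → x = 0 from
    fun x y h ↦ sub_eq_zero.1 (this _ (by rw [smul_sub, sub_eq_zero]; exact h))
  intro x hx
  have hcoeff (i : ℕ) : x.coeff i = s • x.coeff (i + 1) := by
    rw [← sub_eq_zero, ← coeff_X_sub_C_smul, hx, PolynomialModule.coeff_zero, Finsupp.zero_apply]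
  have hpow (i j : ℕ) : x.coeff i = s ^ j • x.coeff (i + j) := by
    induction j with
    | zero => simp
    | succ j ih => rw [ih, hcoeff, smul_smul, ← pow_succ, add_assoc]
  ext i
  obtain ⟨b, hb⟩ := x.coeff.support.bddAbove
  rw [hpow i (b + 1), Finsupp.notMem_support_iff.1 fun h ↦ absurd (hb h) (by lia)]
  simp

lemma exact_X_sub_C_smul_eval (s : R) :
    Function.Exact (fun x : PolynomialModule R M ↦ (X - C s) • x) (PolynomialModule.eval s) := by
  have hdvd (x : PolynomialModule R M) :
      ∃ y, x = (X - C s) • y + PolynomialModule.single R 0 (PolynomialModule.eval s x) := by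
    induction x using PolynomialModule.induction_linear with
    | zero => exact ⟨0, by simp⟩
    | add x y hx hy =>
      obtain ⟨a, ha⟩ := hx
      obtain ⟨b, hb⟩ := hy
      refine ⟨a + b, ?_⟩
      rw [map_add, PolynomialModule.single_add, smul_add, add_add_add_comm, ← ha, ← hb]
    | single n m =>
      obtain ⟨g, hg⟩ := sub_dvd_pow_sub_pow (X : R[X]) (C s) n
      refine ⟨g • PolynomialModule.single R 0 m, ?_⟩
      rw [smul_smul, ← hg, sub_smul, ← C_pow, ← monomial_zero_left, X_pow_eq_monomial,
        PolynomialModule.monomial_smul_single, PolynomialModule.monomial_smul_single,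
        PolynomialModule.eval_single]
      simp
  refine fun x ↦ ⟨fun hx ↦ ?_, ?_⟩
  · obtain ⟨y, hy⟩ := hdvd x
    exact ⟨y, by rw [hy, hx]; simp⟩
  · rintro ⟨y, rfl⟩
    simp [PolynomialModule.eval_smul]

lemma C_smul_eq_zero {s : R} (hs : s ∈ Module.annihilator R M) (x : PolynomialModule R M) :
    (C s : R[X]) • x = 0 := by
  ext i
  rw [← monomial_zero_left, PolynomialModule.monomial_smul_apply, if_pos i.zero_le,
    Module.mem_annihilator.1 hs]
  rfl

end PolynomialModule

section FreeVariable

open Polynomial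

variable {σ : Type v} {A : Type w} {M : Type max v w} [CommRing A] [AddCommGroup M]
  [Module (MvPolynomial σ A) M]

open Classical in
/-- The substitution `X r ↦ T`, `X j ↦ X j` for `j ≠ r`, from `A[X]` to `A[X][T]`. -/
def substVariable (A : Type w) [CommRing A] (r : σ) :
    MvPolynomial σ A →ₐ[A] (MvPolynomial σ A)[X] :=
  MvPolynomial.aeval fun j ↦ if j = r then X else C (MvPolynomial.X j)

lemma substVariable_X_self (r : σ) : substVariable A r (MvPolynomial.X r) = X := by
  simp [substVariable]

lemma substVariable_X_of_ne {r j : σ} (h : j ≠ r) :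
    substVariable A r (MvPolynomial.X j) = C (MvPolynomial.X j) := by
  simp [substVariable, h]

lemma eval_substVariable (r : σ) (f : MvPolynomial σ A) :
    (substVariable A r f).eval (MvPolynomial.X r) = f := by
  induction f using MvPolynomial.induction_on with
  | C c =>
    rw [← MvPolynomial.algebraMap_eq, AlgHom.commutes]
    simp [Polynomial.algebraMap_apply]
  | add p q hp hq => simp [hp, hq]
  | mul_X p j hp =>
    rw [map_mul, Polynomial.eval_mul, hp]
    by_cases hj : j = r <;> simp [substVariable, hj]

variable (A M) in
/-- `M[T]`, on which `X r` acts as `T` and the other variables act through `M`. -/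
def FreedModule (_r : σ) : Type max v w := PolynomialModule (MvPolynomial σ A) M

namespace FreedModule

instance (r : σ) : AddCommGroup (FreedModule A M r) :=
  inferInstanceAs (AddCommGroup (PolynomialModule (MvPolynomial σ A) M))

instance (r : σ) : Module (MvPolynomial σ A) (FreedModule A M r) :=
  Module.compHom (PolynomialModule (MvPolynomial σ A) M) (substVariable A r).toRingHom

instance (r : σ) : Module (MvPolynomial σ A)[X] (FreedModule A M r) :=
  inferInstanceAs (Module (MvPolynomial σ A)[X] (PolynomialModule (MvPolynomial σ A) M))

lemma smul_def {r : σ} (f : MvPolynomial σ A) (x : FreedModule A M r) :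
    f • x = substVariable A r f • x :=
  rfl

instance (r : σ) : SMulCommClass (MvPolynomial σ A)[X] (MvPolynomial σ A) (FreedModule A M r) where
  smul_comm g f x := by rw [smul_def, smul_def, smul_comm]

variable (A M) in
/-- The evaluation `M[T] → M` at `T = X r`. -/
def eval (r : σ) : FreedModule A M r →ₗ[MvPolynomial σ A] M where
  toFun := PolynomialModule.eval (R := MvPolynomial σ A) (M := M) (MvPolynomial.X r)
  map_add' := map_add (PolynomialModule.eval (R := MvPolynomial σ A) (MvPolynomial.X r))
  map_smul' f x := (PolynomialModule.eval_smul (substVariable A r f) _ _).trans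
    (by rw [eval_substVariable]; rfl)

lemma eval_surjective (r : σ) : Function.Surjective (eval A M r) := fun m ↦
  ⟨PolynomialModule.single (MvPolynomial σ A) 0 m,
    (PolynomialModule.eval_single (MvPolynomial.X r) 0 m).trans (by simp)⟩

variable (A M) in
/-- The action of `A[X][T]` on `M[T]`. -/
abbrev polynomialEnd (r : σ) :
    (MvPolynomial σ A)[X] →+* Module.End (MvPolynomial σ A) (FreedModule A M r) :=
  Module.toModuleEnd _ _

lemma X_sub_C_injective (r : σ) :
    Function.Injective (polynomialEnd A M r (X - C (MvPolynomial.X r))) :=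
  X_sub_C_smul_injective (M := M) (MvPolynomial.X r)

lemma exact_X_sub_C_eval (r : σ) :
    Function.Exact (polynomialEnd A M r (X - C (MvPolynomial.X r))) (eval A M r) :=
  exact_X_sub_C_smul_eval (M := M) (MvPolynomial.X r)

lemma polynomialEnd_X (r : σ) :
    polynomialEnd A M r X = (MvPolynomial.X r : MvPolynomial σ A) • 1 := by
  ext x
  exact congrArg (fun g : (MvPolynomial σ A)[X] ↦ g • x) (substVariable_X_self r).symm

lemma C_smul_eq_zero_of_mem {r : σ} {f : MvPolynomial σ A} (hf : f ∈ Module.annihilator _ M)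
    (x : FreedModule A M r) : (C f : (MvPolynomial σ A)[X]) • x = 0 :=
  C_smul_eq_zero (M := M) hf x

lemma isNilpotent_polynomialEnd_C {r : σ} {f : MvPolynomial σ A} {e : ℕ}
    (hf : f ^ e ∈ Module.annihilator _ M) : IsNilpotent (polynomialEnd A M r (C f)) := by
  refine ⟨e, LinearMap.ext fun x ↦ ?_⟩
  rw [← map_pow, ← C_pow]
  exact C_smul_eq_zero_of_mem hf x

lemma X_pow_mem_annihilator {r j : σ} (hj : j ≠ r) {e : ℕ}
    (h : MvPolynomial.X j ^ e ∈ Module.annihilator (MvPolynomial σ A) M) :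
    MvPolynomial.X j ^ e ∈ Module.annihilator (MvPolynomial σ A) (FreedModule A M r) := by
  refine Module.mem_annihilator.2 fun x ↦ ?_
  rw [smul_def, map_pow, substVariable_X_of_ne hj, ← C_pow, C_smul_eq_zero_of_mem h]

end FreedModule

end FreeVariable

section TorNonvanishing

variable {σ : Type v} {A : Type w} [CommRing A] {N : ModuleCat.{max v w} (MvPolynomial σ A)}

open FreedModule in
theorem not_isZero_homology_tensorComplex (P : ProjectiveResolution N)
    (hN : ∀ i, ∃ c, MvPolynomial.X i ^ c ∈ Module.annihilator (MvPolynomial σ A) N)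
    (j : ℕ) (s : Finset σ) (hj : j ≤ s.card)
    (M : Type max v w) [AddCommGroup M] [Module (MvPolynomial σ A) M]
    [hNM : Nontrivial (N ⊗[MvPolynomial σ A] M)]
    (hM : ∀ i ∈ s, ∃ e, MvPolynomial.X i ^ e ∈ Module.annihilator (MvPolynomial σ A) M) :
    ¬ IsZero ((tensorComplex.homology P j).obj (.of _ M)) := by
  classical
  induction j generalizing s M with
  | zero =>
    intro h
    exact not_subsingleton _ (ModuleCat.isZero_iff_subsingleton.1
      (h.of_iso (tensorComplex.homologyZeroIso P _).symm))
  | succ j ih =>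
    intro h
    obtain ⟨r, hr⟩ : s.Nonempty := Finset.card_pos.1 (by lia)
    obtain ⟨c, hc⟩ := hN r
    obtain ⟨e, he⟩ := hM r hr
    have hND : Nontrivial (N ⊗[MvPolynomial σ A] FreedModule A M r) :=
      (LinearMap.lTensor_surjective N (eval_surjective r)).nontrivial
    refine ih (s.erase r) (by rw [Finset.card_erase_of_mem hr]; lia) (FreedModule A M r)
      (fun i hi ↦ ?_) (tensorComplex.isZero_homology_of_isZero_homology_succ P
        (X_sub_C_injective r) (eval_surjective r) (exact_X_sub_C_eval r)
        (isNilpotent_polynomialEnd_C he) hc (by rw [map_sub, polynomialEnd_X]) h)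
    obtain ⟨e', he'⟩ := hM i (Finset.mem_of_mem_erase hi)
    exact ⟨e', X_pow_mem_annihilator (Finset.ne_of_mem_erase hi) he'⟩

end TorNonvanishing

section NontrivialTensor

variable {R : Type*} [CommRing R] {J : Ideal R} {c e : ℕ} {N M : Type*} [AddCommGroup N]
  [Module R N] [Nontrivial N] [AddCommGroup M] [Module R M] [Nontrivial M]

lemma smul_top_ne_top_of_pow_le_annihilator (hN : J ^ c ≤ Module.annihilator R N) :
    (J • ⊤ : Submodule R N) ≠ ⊤ := by
  intro h
  have hpow (t : ℕ) : (J ^ t • ⊤ : Submodule R N) = ⊤ := by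
    induction t with
    | zero => simp
    | succ t ih => rw [pow_succ, Submodule.mul_smul, h, ih]
  refine top_ne_bot ((hpow c).symm.trans (eq_bot_iff.2 (Submodule.smul_le.2 fun r hr x _ ↦ ?_)))
  exact (Submodule.mem_bot R).2 (Module.mem_annihilator.1 (hN hr) x)

lemma exists_linearMap_quotient_ne_zero [J.IsMaximal] (hN : J ^ c ≤ Module.annihilator R N) :
    ∃ f : N →ₗ[R] R ⧸ J, f ≠ 0 := by
  let := Ideal.Quotient.field J
  have : Nontrivial (N ⧸ (J • ⊤ : Submodule R N)) :=
    Submodule.Quotient.nontrivial_iff.2 (smul_top_ne_top_of_pow_le_annihilator hN)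
  obtain ⟨g, hg⟩ := exists_ne (0 : Module.Dual (R ⧸ J) (N ⧸ (J • ⊤ : Submodule R N)))
  refine ⟨g.restrictScalars R ∘ₗ Submodule.mkQ _, fun h ↦ hg (LinearMap.ext fun y ↦ ?_)⟩
  obtain ⟨x, rfl⟩ := Submodule.mkQ_surjective _ y
  exact congr($h x)

lemma nontrivial_tensor_of_pow_le_annihilator [J.IsMaximal]
    (hN : J ^ c ≤ Module.annihilator R N) (hM : J ^ e ≤ Module.annihilator R M) :
    Nontrivial (N ⊗[R] M) := by
  obtain ⟨f, hf⟩ := exists_linearMap_quotient_ne_zero hN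
  obtain ⟨g, hg⟩ := exists_linearMap_quotient_ne_zero hM
  obtain ⟨x, hx⟩ := DFunLike.ne_iff.1 hf
  obtain ⟨y, hy⟩ := DFunLike.ne_iff.1 hg
  refine ⟨x ⊗ₜ y, 0, fun h ↦ mul_ne_zero hx hy ?_⟩
  exact congr((LinearMap.mul' R (R ⧸ J) ∘ₗ TensorProduct.map f g) $h)

end NontrivialTensor

lemma isMaximal_idealOfVars (σ K : Type*) [Field K] : (MvPolynomial.idealOfVars σ K).IsMaximal := by
  have hker : MvPolynomial.idealOfVars σ K = RingHom.ker (MvPolynomial.constantCoeff (R := K)) := by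
    ext p
    rw [← pow_one (MvPolynomial.idealOfVars σ K), MvPolynomial.mem_pow_idealOfVars_iff',
      RingHom.mem_ker]
    simp [MvPolynomial.constantCoeff_eq, Finsupp.degree_eq_zero_iff]
  rw [hker]
  exact RingHom.ker_isMaximal_of_surjective _ fun a ↦ ⟨.C a, by simp⟩

section FreeResolution

variable {R : Type u} [CommRing R] {N : Type u} [AddCommGroup N] [Module R N] {L : ℕ → Type u}
  [∀ j, AddCommGroup (L j)] [∀ j, Module R (L j)] {d : ∀ j, L (j + 1) →ₗ[R] L j}
  {aug : L 0 →ₗ[R] N}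

/-- The chain complex `⋯ → L 1 → L 0`. -/
def syzygyComplex (hd : ∀ j, Function.Exact (d (j + 1)) (d j)) :
    ChainComplex (ModuleCat.{u} R) ℕ :=
  ChainComplex.of (fun j ↦ .of R (L j)) (fun j ↦ ModuleCat.ofHom (d j))
    fun j ↦ ModuleCat.hom_ext (hd j).linearMap_comp_eq_zero

lemma syzygyComplex_d (hd : ∀ j, Function.Exact (d (j + 1)) (d j)) (j : ℕ) :
    (syzygyComplex hd).d (j + 1) j = ModuleCat.ofHom (d j) := by
  simp [syzygyComplex]

variable [∀ j, Module.Projective R (L j)]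

/-- The projective resolution of `N` given by an exact sequence `⋯ → L 1 → L 0 → N → 0` of
projective modules. -/
def resolution (haug : Function.Surjective aug) (hd₀ : Function.Exact (d 0) aug)
    (hd : ∀ j, Function.Exact (d (j + 1)) (d j)) : ProjectiveResolution (ModuleCat.of R N) where
  complex := syzygyComplex hd
  projective j := (IsProjective.iff_projective (L j)).1 inferInstance
  π := (ChainComplex.toSingle₀Equiv _ _).symm ⟨ModuleCat.ofHom aug, by
    rw [syzygyComplex_d]
    exact ModuleCat.hom_ext hd₀.linearMap_comp_eq_zero⟩
  quasiIso := ⟨fun j ↦ by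
    cases j with
    | zero =>
      rw [ChainComplex.quasiIsoAt₀_iff, ShortComplex.quasiIso_iff_of_zeros']
      · refine ⟨(ShortComplex.ShortExact.moduleCat_exact_iff_function_exact _).2 ?_,
          (ModuleCat.epi_iff_surjective _).2 haug⟩
        change Function.Exact ((syzygyComplex hd).d 1 0) aug
        rwa [syzygyComplex_d]
      all_goals rfl
    | succ j =>
      rw [quasiIsoAt_iff_exactAt' _ _ (ChainComplex.exactAt_succ_single_obj _ _),
        HomologicalComplex.exactAt_iff' _ (j + 1 + 1) (j + 1) j (by simp) (by simp),
        ShortComplex.ShortExact.moduleCat_exact_iff_function_exact]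
      change Function.Exact ((syzygyComplex hd).d (j + 2) (j + 1)) ((syzygyComplex hd).d (j + 1) j)
      rw [syzygyComplex_d, syzygyComplex_d]
      exact hd j⟩

lemma isZero_homology_succ (haug : Function.Surjective aug) (hd₀ : Function.Exact (d 0) aug)
    (hd : ∀ j, Function.Exact (d (j + 1)) (d j)) {M : Type u} [AddCommGroup M] [Module R M]
    {j : ℕ} (h : Function.Exact ((d (j + 1)).rTensor M) ((d j).rTensor M)) :
    IsZero ((tensorComplex.homology (resolution haug hd₀ hd) (j + 1)).obj (.of R M)) := by
  refine HomologicalComplex.ExactAt.isZero_homology ?_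
  rw [HomologicalComplex.exactAt_iff' _ (j + 1 + 1) (j + 1) j (by simp) (by simp),
    ShortComplex.ShortExact.moduleCat_exact_iff_function_exact]
  change Function.Exact (((syzygyComplex hd).d (j + 2) (j + 1)).hom.rTensor M)
    (((syzygyComplex hd).d (j + 1) j).hom.rTensor M)
  rw [syzygyComplex_d, syzygyComplex_d]
  exact h

lemma isZero_homology_zero (haug : Function.Surjective aug) (hd₀ : Function.Exact (d 0) aug)
    (hd : ∀ j, Function.Exact (d (j + 1)) (d j)) {M : Type u} [AddCommGroup M] [Module R M]
    (h : Function.Surjective ((d 0).rTensor M)) :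
    IsZero ((tensorComplex.homology (resolution haug hd₀ hd) 0).obj (.of R M)) := by
  have hexact := rTensor_exact M hd₀ haug
  have : Subsingleton (N ⊗[R] M) := by
    refine subsingleton_of_forall_eq 0 fun y ↦ ?_
    obtain ⟨x, rfl⟩ := LinearMap.rTensor_surjective M haug y
    exact (hexact x).2 (h x)
  exact (ModuleCat.isZero_of_subsingleton (ModuleCat.of R (N ⊗[R] M))).of_iso
    (tensorComplex.homologyZeroIso (resolution haug hd₀ hd) (.of R M))

end FreeResolution

section SyzygyTensor

namespace LocalExt

variable {R : Type u} [CommRing R] {J : Ideal R} {i : ℕ}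

lemma subsingleton_of_linearEquiv {M N : Type u} [AddCommGroup M] [Module R M] [AddCommGroup N]
    [Module R N] (e : M ≃ₗ[R] N) (h : Subsingleton (LocalExt J i N)) :
    Subsingleton (LocalExt J i M) := by
  refine subsingleton_of_forall_eq 0 fun z ↦ ?_
  rw [← map_id_apply (J := J) z, ← e.symm_comp, map_comp_apply, Subsingleton.elim (map J i _ z) 0,
    map_zero]

end LocalExt

lemma IsPowTorsion.tensor_of_pow_le_annihilator {R : Type*} [CommRing R] {J : Ideal R} {c : ℕ}
    {N Q : Type*} [AddCommGroup N] [Module R N] [AddCommGroup Q] [Module R Q]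
    (h : J ^ c ≤ Module.annihilator R N) : IsPowTorsion J (N ⊗[R] Q) := by
  refine .of_pow_le_annihilator (c := c) fun r hr ↦ Module.mem_annihilator.2 fun y ↦ ?_
  have hzero : r • (LinearMap.id : N →ₗ[R] N) = 0 :=
    LinearMap.ext fun x ↦ Module.mem_annihilator.1 (h hr) x
  calc r • y = (r • LinearMap.id : N →ₗ[R] N).rTensor Q y := by simp
    _ = 0 := by rw [hzero, LinearMap.rTensor_zero, LinearMap.zero_apply]

variable {R : Type u} [CommRing R] [IsNoetherianRing R] {J : Ideal R} {N Q : Type u}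
  [AddCommGroup N] [Module R N] [AddCommGroup Q] [Module R Q] {L : ℕ → Type u}
  [∀ j, AddCommGroup (L j)] [∀ j, Module R (L j)] [∀ j, Module.Free R (L j)]
  [∀ j, Module.Finite R (L j)] {d : ∀ j, L (j + 1) →ₗ[R] L j} {aug : L 0 →ₗ[R] N}

open LocalExt in
theorem isZero_homology_tensorComplex_localExt (haug : Function.Surjective aug)
    (hd₀ : Function.Exact (d 0) aug) (hd : ∀ j, Function.Exact (d (j + 1)) (d j)) {c : ℕ}
    (hN : J ^ c ≤ Module.annihilator R N)
    {F : Type*} [AddCommGroup F] [Module R F] [Module.Flat R F] {p : F →ₗ[R] Q} {t : ℕ}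
    (ht : J ^ t ≤ splittingIdeal p) {j l : ℕ} (hjl : j ≤ l)
    (hvan : ∀ i < l, l < i + j → Subsingleton (LocalExt J (i + 1) Q))
    (h : Subsingleton (LocalExt J (l + 2) (LinearMap.range (d (j + 1)) ⊗[R] Q))) :
    IsZero ((tensorComplex.homology (resolution haug hd₀ hd) j).obj
      (.of R (LocalExt J (l + 1) Q))) := by
  let π (i : ℕ) : L i →ₗ[R] L i ⧸ LinearMap.range (d i) := Submodule.mkQ _
  let ι (i : ℕ) : (L (i + 1) ⧸ LinearMap.range (d (i + 1))) →ₗ[R] L i :=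
    Submodule.liftQ _ (d i) (LinearMap.exact_iff.1 (hd i)).ge
  have hπ (i : ℕ) : Function.Surjective (π i) := Submodule.mkQ_surjective _
  have hιinj (i : ℕ) : Function.Injective (ι i) :=
    LinearMap.ker_eq_bot.1 (Submodule.ker_liftQ_eq_bot _ _ _ (LinearMap.exact_iff.1 (hd i)).le)
  have hιπ (i : ℕ) : ι i ∘ₗ π (i + 1) = d i := Submodule.liftQ_mkQ _ _ _
  have hex (i : ℕ) : Function.Exact (ι i) (π i) := LinearMap.exact_iff.2 <| by
    rw [Submodule.ker_mkQ, Submodule.range_liftQ]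
  have hι (i : ℕ) : IsPowTorsion J (LinearMap.ker ((ι i).rTensor Q)) :=
    isPowTorsion_ker_rTensor ht (hιinj i)
  have h₀ : IsPowTorsion J ((L 0 ⧸ LinearMap.range (d 0)) ⊗[R] Q) :=
    .tensor_of_pow_le_annihilator <| hN.trans_eq <|
      (hd₀.linearEquivOfSurjective haug).annihilator_eq.symm
  have hS : Subsingleton (LocalExt J (l + 2) ((L (j + 2) ⧸ LinearMap.range (d (j + 2))) ⊗[R] Q)) :=
    subsingleton_of_linearEquiv (((Submodule.quotEquivOfEq _ _
      (LinearMap.exact_iff.1 (hd (j + 1))).symm).trans (d (j + 1)).quotKerEquivRange).rTensor Q) h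
  obtain _ | j := j
  · refine isZero_homology_zero haug hd₀ hd ?_
    simpa only [hιπ] using rTensor_surjective_of_subsingleton hπ hex hι h₀ l hS
  · obtain ⟨c, rfl⟩ : ∃ c, l = c + 1 + j := ⟨l - 1 - j, by lia⟩
    refine isZero_homology_succ haug hd₀ hd ?_
    simpa only [hιπ] using rTensor_exact_of_subsingleton hπ hex hι h₀ c j
      (fun m hm ↦ hvan _ (by lia) (by lia)) hS

end SyzygyTensor

end Jyotilingam

open Jyotilingam MvPolynomial in
theorem jyotilingam_nonvanishing_general {K : Type u} [Field K] {m : ℕ} {N : Type u}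
    [AddCommGroup N] [Module (MvPolynomial (Fin m) K) N] [Nontrivial N] {c : ℕ}
    (hN : idealOfVars (Fin m) K ^ c ≤ Module.annihilator (MvPolynomial (Fin m) K) N)
    {L : ℕ → Type u} [∀ j, AddCommGroup (L j)] [∀ j, Module (MvPolynomial (Fin m) K) (L j)]
    [∀ j, Module.Free (MvPolynomial (Fin m) K) (L j)]
    [∀ j, Module.Finite (MvPolynomial (Fin m) K) (L j)]
    {d : ∀ j, L (j + 1) →ₗ[MvPolynomial (Fin m) K] L j} {aug : L 0 →ₗ[MvPolynomial (Fin m) K] N}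
    (haug : Function.Surjective aug) (hd₀ : Function.Exact (d 0) aug)
    (hd : ∀ j, Function.Exact (d (j + 1)) (d j))
    {Q : Type u} [AddCommGroup Q] [Module (MvPolynomial (Fin m) K) Q]
    [Module.Finite (MvPolynomial (Fin m) K) Q]
    (hQ : ∀ (p : Ideal (MvPolynomial (Fin m) K)) [p.IsPrime], ¬ idealOfVars (Fin m) K ≤ p →
      Module.Projective (Localization.AtPrime p) (LocalizedModule p.primeCompl Q))
    {j l : ℕ} (hjl : j ≤ l) (hl : l + 1 < m)
    (hM : ¬ Subsingleton ((localCohomology (idealOfVars (Fin m) K) (l + 1)).obj (.of _ Q)))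
    (hvan : ∀ i < l, l < i + j →
      Subsingleton ((localCohomology (idealOfVars (Fin m) K) (i + 1)).obj (.of _ Q))) :
    ¬ Subsingleton ((localCohomology (idealOfVars (Fin m) K) (l + 2)).obj
      (.of _ (LinearMap.range (d (j + 1)) ⊗[MvPolynomial (Fin m) K] Q))) := by
  simp only [LocalExt.subsingleton_localCohomology_iff] at hM hvan ⊢
  intro h
  obtain ⟨r, p, hp⟩ := Module.Finite.exists_fin' (MvPolynomial (Fin m) K) Q
  have := Module.finitePresentation_of_finite (MvPolynomial (Fin m) K) Q
  obtain ⟨t, ht⟩ := exists_pow_le_splittingIdeal hp (idealOfVars_fg (Fin m) K) hQ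
  have hMann : idealOfVars (Fin m) K ^ t ≤ Module.annihilator (MvPolynomial (Fin m) K)
      (LocalExt (idealOfVars (Fin m) K) (l + 1) Q) :=
    ht.trans (LocalExt.splittingIdeal_le_annihilator
      (LocalExt.subsingleton_of_free _ (subsingleton_localExt_idealOfVars hl)))
  have := not_subsingleton_iff_nontrivial.1 hM
  have := isMaximal_idealOfVars (Fin m) K
  have := nontrivial_tensor_of_pow_le_annihilator hN hMann
  have hX (i : Fin m) : (X i : MvPolynomial (Fin m) K) ∈ idealOfVars (Fin m) K :=
    Ideal.subset_span ⟨i, rfl⟩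
  exact not_isZero_homology_tensorComplex (resolution haug hd₀ hd)
    (fun i ↦ ⟨c, hN (Ideal.pow_mem_pow (hX i) c)⟩) j .univ (by simp; lia) _
    (fun i _ ↦ ⟨t, hMann (Ideal.pow_mem_pow (hX i) t)⟩)
    (isZero_homology_tensorComplex_localExt haug hd₀ hd hN ht hjl hvan h)

/-- Jyotilingam-type nonvanishing.  Let `N` be a (nonzero) finite
length graded `S`-module with `k`-th syzygy bundle `P_k` on `ℙⁿ`, `k ≥ 1`.  Let `Q` be
a vector bundle on `ℙⁿ` with `H^l_*(Q) = M ≠ 0` for some `k ≤ l ≤ n-2` and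
`H^i_*(Q) = 0` for `i = l-1, l-2, …, l-k+2`.  Then `H^{l+1}_*(P_k ⊗ Q) ≠ 0`. -/
theorem jyotilingam_nonvanishing
    (K : Type) [Field K] (n : ℕ)
    (N : Type) [AddCommGroup N] [Module (PolyS K n) N]
    (hN : Nontrivial N)
    (hNfl : IsGradedFiniteLength K n N)
    (res : MinimalResolution K n N)
    (k : ℕ) (hk : 1 ≤ k)
    (Q : Type) [AddCommGroup Q] [Module (PolyS K n) Q]
    (hQ : IsBundleModule K n Q)
    (l : ℕ) (hkl : k ≤ l) (hl : l ≤ n - 2)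
    (hM : ¬ Subsingleton (Hstar K n l Q))
    (hvan : ∀ i : ℕ, l - k + 2 ≤ i → i ≤ l - 1 → Subsingleton (Hstar K n i Q)) :
    ¬ Subsingleton (Hstar K n (l+1)
      (TensorProduct (PolyS K n) ↥(LinearMap.range (res.d k)) Q)) := by
  obtain ⟨j, rfl⟩ := Nat.exists_eq_add_of_le' hk
  obtain ⟨c, hc⟩ := hNfl.2
  have := res.free
  have := res.finite
  have := hQ.finite
  refine jyotilingam_nonvanishing_general hc res.aug_surjective
    (LinearMap.exact_iff.2 res.exact0.symm) (fun i ↦ LinearMap.exact_iff.2 (res.exact i).symm)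
    (fun p _ hp ↦ ?_) (by lia) (by lia) hM fun i _ _ ↦ hvan i (by lia) (by lia)
  have := hQ.locFree ⟨p, inferInstance⟩ fun h ↦ hp h.ge
  exact .of_free
end
end
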